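/- There is an absolute constant C > 0 with the following property. Let m and n be integers, set N = 24n−23, and write 24m−23 = v²·M where v is a positive integer and M is a squarefree integer. Then for every integer c ≥ 1, |S(m,n,c,χ)| ≤ C · τ(gcd(v,c)) · τ(c) · gcd(M·N, c)^{1/2} · c^{1/2}, where τ(c) is the number of positive divisors of c and gcd(M·N, c) denotes the (nonnegative) greatest common divisor of the integers M·N and c. -/

import Mathlib

open Finset

/-- `e(x) = exp(2πix)`. -/
noncomputable def eFun (x : ℝ) : ℂ := Complex.exp (2 * (Real.pi : ℂ) * Complex.I * (x : ℂ))

/-- The Dedekind sum `s(d,c)`. -/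
noncomputable def dedekindS (d : ℤ) (c : ℕ) : ℝ :=
  ∑ r ∈ Finset.Icc 1 (c - 1),
    ((r : ℝ) / c) * ((d : ℝ) * r / c - ⌊(d : ℝ) * r / c⌋ - 1 / 2)

/-- The Kloosterman sum `S(m,n,c,χ)` with the eta multiplier. -/
noncomputable def klooS (m n : ℤ) (c : ℕ) : ℂ :=
  Complex.exp ((Real.pi : ℂ) * Complex.I / 4) *
    ∑ d ∈ (Finset.Icc 1 c).filter fun d => Nat.gcd d c = 1,
      Complex.exp ((Real.pi : ℂ) * Complex.I * (dedekindS (d : ℤ) c)) *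
        eFun ((((m : ℝ) - 1) * (((d : ZMod c)⁻¹).val : ℝ) + ((n : ℝ) - 1) * (d : ℝ)) / c)


/-! ### Part 1: Dedekind sums -/

/-- `∑ r * ⌊d r / c⌋`. -/
def dF (d c : ℕ) : ℤ := ∑ r ∈ range c, (r : ℤ) * ((d * r / c : ℕ) : ℤ)

/-- The integer `12 c s(d,c)`. -/
def dN (d c : ℕ) : ℤ :=
  2 * d * (c - 1) * (2 * c - 1) - 12 * dF d c - 3 * c * (c - 1)

lemma sum_id_int (c : ℕ) : 2 * ∑ r ∈ range c, (r : ℤ) = c * (c - 1) := by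
  induction c with
  | zero => simp
  | succ k ih => rw [sum_range_succ, mul_add, ih]; push_cast; ring

lemma sum_sq_int (c : ℕ) : 6 * ∑ r ∈ range c, (r : ℤ) ^ 2 = (c - 1) * c * (2 * c - 1) := by
  induction c with
  | zero => simp
  | succ k ih => rw [sum_range_succ, mul_add, ih]; push_cast; ring

lemma dedekindS_eq (d c : ℕ) (hc : 1 ≤ c) : 12 * (c : ℝ) * dedekindS (d : ℤ) c = (dN d c : ℝ) := by
  have hc' : (c : ℝ) ≠ 0 := by positivity
  have h1 : dedekindS (d : ℤ) c = ∑ r ∈ range c,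
      ((r : ℝ) / c) * ((d : ℝ) * r / c - ((d * r / c : ℕ) : ℝ) - 1 / 2) := by
    unfold dedekindS
    have : range c = insert 0 (Finset.Icc 1 (c - 1)) := by
      ext x; simp; omega
    rw [this, sum_insert (by simp)]
    simp only [Nat.cast_zero, zero_div, zero_mul, zero_add]
    refine sum_congr rfl fun r _ => ?_
    have : ⌊(((d : ℤ) : ℝ)) * (r : ℝ) / (c : ℝ)⌋ = ((d * r / c : ℕ) : ℤ) := by
      have := Nat.floor_div_eq_div (K := ℝ) (d * r) c
      rw [← this, Int.natCast_floor_eq_floor (by positivity)]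
      push_cast; rfl
    rw [this]; simp only [Int.cast_natCast]
  have h2 : (2 * ∑ r ∈ range c, (r : ℝ)) = c * (c - 1) := by
    have := congrArg (Int.cast : ℤ → ℝ) (sum_id_int c)
    push_cast at this; exact this
  have h3 : (6 * ∑ r ∈ range c, (r : ℝ) ^ 2) = (c - 1) * c * (2 * c - 1) := by
    have := congrArg (Int.cast : ℤ → ℝ) (sum_sq_int c)
    push_cast at this; exact this
  have h4 : dedekindS (d : ℤ) c = d / c ^ 2 * (∑ r ∈ range c, (r : ℝ) ^ 2) -
     1 / c * (dF d c : ℝ) - 1 / (2 * c) * (∑ r ∈ range c, (r : ℝ)) := by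
    rw [h1]; unfold dF
    simp only [Int.cast_sum, Int.cast_mul, Int.cast_natCast]
    rw [mul_sum, mul_sum, mul_sum, ← sum_sub_distrib, ← sum_sub_distrib]
    refine sum_congr rfl fun r _ => ?_
    field_simp
  have h2' : (∑ r ∈ range c, (r : ℝ)) = c * (c - 1) / 2 := by linarith
  have h3' : (∑ r ∈ range c, (r : ℝ) ^ 2) = (c - 1) * c * (2 * c - 1) / 6 := by linarith
  rw [h4, h2', h3']; unfold dN; push_cast; field_simp; ring

lemma dN_dvd3 (d c : ℕ) (hc : ¬ 3 ∣ c) : (3 : ℤ) ∣ dN d c := by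
  have h : (3 : ℤ) ∣ ((c : ℤ) - 1) * (2 * c - 1) := by
    have : c % 3 = 1 ∨ c % 3 = 2 := by omega
    rcases this with h | h
    · exact Dvd.dvd.mul_right (by omega) _
    · exact Dvd.dvd.mul_left (by omega) _
  obtain ⟨k, hk⟩ := h
  refine ⟨2 * d * k - 4 * dF d c - c * (c - 1), ?_⟩
  unfold dN
  linear_combination 2 * (d : ℤ) * hk

lemma dN_add (d c : ℕ) (hc : 1 ≤ c) : dN (d + c) c = dN d c := by
  have : dF (d + c) c = dF d c + ∑ r ∈ range c, (r : ℤ) ^ 2 := by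
    unfold dF
    rw [← sum_add_distrib]
    refine sum_congr rfl fun r _ => ?_
    rw [add_mul, Nat.add_mul_div_left _ _ (by omega)]
    push_cast; ring
  unfold dN
  rw [this]
  have := sum_sq_int c
  push_cast
  linear_combination -2 * this

lemma dN_mod (d c : ℕ) (hc : 1 ≤ c) : dN (d % c) c = dN d c := by
  conv_rhs => rw [← Nat.mod_add_div d c]
  induction d / c with
  | zero => simp
  | succ k ih => rw [ih, mul_add, mul_one, ← add_assoc, dN_add _ _ hc]

lemma div_refl (d c r : ℕ) (hd : d ≤ c) (h : Nat.Coprime d c) (hr0 : 0 < r) (hr : r < c) :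
    (((c - d) * r / c : ℕ) : ℤ) = r - 1 - ((d * r / c : ℕ) : ℤ) := by
  have h1 : ¬ c ∣ d * r := fun hh =>
    absurd (Nat.le_of_dvd hr0 (Nat.Coprime.dvd_of_dvd_mul_left h.symm hh)) (by omega)
  have h2 := Nat.div_add_mod (d * r) c
  have h3 : 0 < d * r % c := Nat.pos_of_ne_zero fun hh => h1 (Nat.dvd_of_mod_eq_zero hh)
  have h4 : d * r % c < c := Nat.mod_lt _ (by omega)
  push_cast
  rw [Int.ediv_eq_iff_of_pos (by omega)]
  rw [Nat.cast_sub hd]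
  have h2' : (c : ℤ) * ((d : ℤ) * r / c) + ((d * r % c : ℕ) : ℤ) = d * r := by exact_mod_cast h2
  constructor <;> nlinarith

lemma dN_refl (d c : ℕ) (hd : d ≤ c) (h : Nat.Coprime d c) (hc : 1 ≤ c) :
    dN (c - d) c = - dN d c := by
  have : dF (c - d) c = ∑ r ∈ range c, (r : ℤ) ^ 2 - ∑ r ∈ range c, (r : ℤ) - dF d c := by
    unfold dF
    rw [← sum_sub_distrib, ← sum_sub_distrib]
    refine sum_congr rfl fun r hr => ?_
    rcases Nat.eq_zero_or_pos r with h0 | h0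
    · simp [h0]
    rw [div_refl d c r hd h h0 (by simpa using hr)]
    ring
  unfold dN
  rw [this, Nat.cast_sub hd]
  have h1 := sum_sq_int c
  have h2 := sum_id_int c
  linear_combination -2 * h1 + 6 * h2

lemma perm_sum (d c : ℕ) (h : Nat.Coprime d c) (hc : 1 ≤ c) (f : ℕ → ℤ) :
    ∑ r ∈ range c, f (d * r % c) = ∑ r ∈ range c, f r := by
  refine sum_nbij (fun r => d * r % c) ?_ ?_ ?_ (fun _ _ => rfl)
  · intro r _; simpa using Nat.mod_lt _ (by omega)
  · intro a ha b hb hab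
    simp only [coe_range, Set.mem_Iio] at ha hb
    have : d * a ≡ d * b [MOD c] := hab
    have := Nat.ModEq.cancel_left_of_coprime (by rwa [Nat.gcd_comm]) this
    exact Nat.ModEq.eq_of_lt_of_lt this ha hb
  · refine Finset.surjOn_of_injOn_of_card_le _ ?_ ?_ le_rfl
    · intro r _; simpa using Nat.mod_lt _ (by omega)
    · intro a ha b hb hab
      simp only [coe_range, Set.mem_Iio] at ha hb
      have : d * a ≡ d * b [MOD c] := hab
      have := Nat.ModEq.cancel_left_of_coprime (by rwa [Nat.gcd_comm]) this
      exact Nat.ModEq.eq_of_lt_of_lt this ha hb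

lemma lattice_sum (d c : ℕ) (h : Nat.Coprime d c) (hc : 1 ≤ c) (hd : 1 ≤ d) :
    ∑ r ∈ range c, (((d * r / c : ℕ) : ℤ) ^ 2 + ((d * r / c : ℕ) : ℤ)) =
      (c - 1) * (d * (d - 1)) - 2 * dF c d := by
  have e1 : ∀ r ∈ range c, (((d * r / c : ℕ) : ℤ) ^ 2 + ((d * r / c : ℕ) : ℤ)) =
      ∑ k ∈ range d, if k * c ≤ d * r then 2 * (k : ℤ) else 0 := by
    intro r hr
    rw [← sum_filter]
    have : (range d).filter (fun k => k * c ≤ d * r) = range (d * r / c + 1) := by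
      ext k
      simp only [mem_filter, mem_range, Nat.lt_succ_iff, Nat.le_div_iff_mul_le hc]
      constructor
      · exact fun h => h.2
      · intro hk
        refine ⟨?_, hk⟩
        have hr' : r < c := by simpa using hr
        by_contra hkd
        have : d * c ≤ k * c := Nat.mul_le_mul_right _ (by omega)
        have : d * r < d * c := Nat.mul_lt_mul_of_pos_left hr' (by omega)
        omega
    rw [this, ← mul_sum, sum_id_int]
    push_cast; ring
  rw [sum_congr rfl e1, sum_comm]
  have e2 : ∀ k ∈ range d, (∑ r ∈ range c, if k * c ≤ d * r then 2 * (k : ℤ) else 0) =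
      2 * k * (c - 1) - 2 * (k * ((c * k / d : ℕ) : ℤ)) := by
    intro k hk
    rcases Nat.eq_zero_or_pos k with h0 | h0
    · simp [h0]
    have hk' : k < d := by simpa using hk
    have hlt : c * k / d < c := by
      rw [Nat.div_lt_iff_lt_mul (by omega)]
      exact Nat.mul_lt_mul_of_pos_left hk' (by omega)
    rw [← sum_filter]
    have : (range c).filter (fun r => k * c ≤ d * r) = Ico (c * k / d + 1) c := by
      ext r
      simp only [mem_filter, mem_range, mem_Ico, Nat.succ_le_iff, Nat.div_lt_iff_lt_mul (show 0 < d by omega)]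
      have hne : c * k ≠ d * r := by
        intro hh
        have : d ∣ c * k := ⟨r, hh⟩
        have := Nat.le_of_dvd h0 (Nat.Coprime.dvd_of_dvd_mul_left h this)
        omega
      rw [mul_comm k c, mul_comm r d]
      omega
    rw [this, sum_const, Nat.card_Ico, nsmul_eq_mul, Nat.cast_sub (by omega)]
    push_cast; ring
  rw [sum_congr rfl e2, sum_sub_distrib, ← mul_sum, ← sum_mul, ← mul_sum, sum_id_int]
  unfold dF
  ring

lemma dN_recip (d c : ℕ) (h : Nat.Coprime d c) (hc : 1 ≤ c) (hd : 1 ≤ d) :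
    (d : ℤ) * dN d c + c * dN c d = c ^ 2 + d ^ 2 + 1 - 3 * c * d := by
  have hm : ∀ r : ℕ, ((d * r % c : ℕ) : ℤ) = d * r - c * ((d * r / c : ℕ) : ℤ) := by
    intro r
    have := Nat.div_add_mod (d * r) c
    have h2 : (c : ℤ) * ((d * r / c : ℕ) : ℤ) + ((d * r % c : ℕ) : ℤ) = d * r := by
      exact_mod_cast this
    linarith
  have e1 := perm_sum d c h hc (fun r => (r : ℤ))
  have e2 := perm_sum d c h hc (fun r => (r : ℤ) ^ 2)
  simp only [hm] at e1 e2
  have e3 := lattice_sum d c h hc hd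
  rw [sum_add_distrib] at e3
  rw [sum_sub_distrib, ← mul_sum, ← mul_sum] at e1
  have e2' : (d : ℤ) ^ 2 * ∑ r ∈ range c, (r : ℤ) ^ 2 - 2 * d * c * dF d c +
      c ^ 2 * ∑ r ∈ range c, ((d * r / c : ℕ) : ℤ) ^ 2 = ∑ r ∈ range c, (r : ℤ) ^ 2 := by
    conv_rhs => rw [← e2]
    unfold dF
    rw [mul_sum, mul_sum, mul_sum, ← sum_sub_distrib, ← sum_add_distrib]
    refine sum_congr rfl fun r _ => ?_
    ring
  have h1 := sum_sq_int c
  have h2 := sum_id_int c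
  unfold dN
  generalize (∑ r ∈ range c, (r : ℤ) ^ 2) = Q at *
  generalize (∑ r ∈ range c, (r : ℤ)) = L at *
  generalize (∑ r ∈ range c, ((d * r / c : ℕ) : ℤ) ^ 2) = G2 at *
  generalize (∑ r ∈ range c, ((d * r / c : ℕ) : ℤ)) = G1 at *
  generalize dF d c = X at *
  generalize dF c d = Y at *
  have hc0 : (c : ℤ) ≠ 0 := by positivity
  apply mul_left_cancel₀ hc0
  linear_combination 6 * e2' - 6 * (c : ℤ) ^ 2 * e3 - 6 * (c : ℤ) * e1 + (1 - (d : ℤ) ^ 2) * h1 + 3 * (c : ℤ) * ((d : ℤ) - 1) * h2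

open NumberTheorySymbols in
lemma dN_mod8 (c : ℕ) : ∀ d : ℕ, Odd c → Nat.Coprime d c →
    (8 : ℤ) ∣ dN d c - (c + 1 - 2 * J((d : ℤ) | c)) := by
  induction c using Nat.strong_induction_on with
  | _ c ih =>
  have key : ∀ d : ℕ, Odd c → Nat.Coprime d c → Odd d → d < c →
      (8 : ℤ) ∣ dN d c - (c + 1 - 2 * J((d : ℤ) | c)) := by
    intro d hc hco hd hlt
    have h1 := ih d hlt c hd hco.symm
    have h2 := dN_recip d c hco hc.pos hd.pos
    have h3 := jacobiSym.quadratic_reciprocity_if (a := d) (b := c)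
      (Nat.odd_iff.mp hd) (Nat.odd_iff.mp hc)
    have hJ := jacobiSym.eq_one_or_neg_one (a := (c : ℤ)) (b := d) (by
      simpa [Int.gcd_natCast_natCast] using hco.symm)
    obtain ⟨k, hk⟩ := h1
    have hc8 : c % 8 = 1 ∨ c % 8 = 3 ∨ c % 8 = 5 ∨ c % 8 = 7 := by
      have := Nat.odd_iff.mp hc; omega
    have hd8 : d % 8 = 1 ∨ d % 8 = 3 ∨ d % 8 = 5 ∨ d % 8 = 7 := by
      have := Nat.odd_iff.mp hd; omega
    have hN : dN c d = 8 * k + (d + 1 - 2 * J((c : ℤ) | d)) := by linarith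
    rw [hN] at h2
    have hz : ((d : ℤ) : ZMod 8) * ((dN d c : ℤ) : ZMod 8) + (c : ℤ) * (8 * k + (d + 1 - 2 * (J((c : ℤ) | d) : ℤ)))
       = (c : ℤ) ^ 2 + (d : ℤ) ^ 2 + 1 - 3 * (c : ℤ) * (d : ℤ) := by
      have := congrArg (Int.cast : ℤ → ZMod 8) h2
      push_cast at this ⊢
      exact this
    rw [← h3]
    have h88 : (8 : ZMod 8) = 0 := by decide
    have goal : ((dN d c - (c + 1 - 2 * (if d % 4 = 3 ∧ c % 4 = 3 then -J((c : ℤ) | d) else J((c : ℤ) | d))) : ℤ) : ZMod 8) = 0 := by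
      have cc : ((c : ℤ) : ZMod 8) = ((c % 8 : ℕ) : ZMod 8) := by simp
      have dd : ((d : ℤ) : ZMod 8) = ((d % 8 : ℕ) : ZMod 8) := by simp
      have c4 : c % 4 = (c % 8) % 4 := by omega
      have d4 : d % 4 = (d % 8) % 4 := by omega
      rw [c4, d4]
      push_cast [h88] at hz ⊢
      simp only [Int.cast_natCast] at cc dd
      rw [cc, dd] at hz
      rw [cc]
      generalize ((dN d c : ℤ) : ZMod 8) = n at *
      generalize (k : ZMod 8) = k at *
      rcases hJ with hJ | hJ <;> rw [hJ] at hz ⊢ <;>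
      rcases hc8 with e | e | e | e <;> rcases hd8 with f | f | f | f <;> rw [e, f] at hz <;>
      rw [e, f] <;> clear * - hz <;> revert n k <;> decide
    exact (ZMod.intCast_zmod_eq_zero_iff_dvd _ 8).mp goal
  intro d hc hco
  have hmod : dN d c = dN (d % c) c := (dN_mod d c hc.pos).symm
  have hJm : J((d : ℤ) | c) = J(((d % c : ℕ) : ℤ) | c) := by
    rw [jacobiSym.mod_left]; push_cast; rfl
  rw [hmod, hJm]
  have hco' : Nat.Coprime (d % c) c := by
    rw [Nat.coprime_iff_gcd_eq_one, ← Nat.gcd_rec, Nat.gcd_comm]; exact hco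
  have hlt : d % c < c := Nat.mod_lt _ hc.pos
  generalize d % c = e at *
  rcases Nat.even_or_odd e with he | he
  · rcases Nat.eq_zero_or_pos e with h0 | h0
    · subst h0
      have : c = 1 := by simpa using hco'
      subst this
      simp [dN, dF]
    · have hodd : Odd (c - e) := Nat.Odd.sub_even hlt.le hc he
      have hcs : Nat.Coprime (c - e) c := by
        rw [Nat.coprime_comm]
        exact (Nat.coprime_self_sub_right hlt.le).mpr hco'.symm
      have h1 := key (c - e) hc hcs hodd (by omega)
      rw [dN_refl e c hlt.le hco' hc.pos] at h1
      have hJ2 : J(((c - e : ℕ) : ℤ) | c) = ZMod.χ₄ c * J((e : ℤ) | c) := by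
        rw [← jacobiSym.neg _ hc]
        apply jacobiSym.mod_left'
        rw [Nat.cast_sub hlt.le]
        simp [sub_eq_add_neg]
      rw [hJ2] at h1
      have hJ := jacobiSym.eq_one_or_neg_one (a := (e : ℤ)) (b := c) (by
        simpa [Int.gcd_natCast_natCast] using hco')
      have hc4 : c % 4 = 1 ∨ c % 4 = 3 := by have := Nat.odd_iff.mp hc; omega
      rcases hc4 with h4 | h4
      · rw [ZMod.χ₄_nat_one_mod_four h4] at h1
        rcases hJ with hJ | hJ <;> rw [hJ] at h1 ⊢ <;> omega
      · rw [ZMod.χ₄_nat_three_mod_four h4] at h1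
        rcases hJ with hJ | hJ <;> rw [hJ] at h1 ⊢ <;> omega
  · exact key e hc hco' he hlt
/-! ### Part 2: twisted Kloosterman sums modulo `q` -/

/-- Twisted Kloosterman sums. -/
noncomputable def KS (q : ℕ) [NeZero q] (χ : (ZMod q)ˣ → ℂ) (A B : ZMod q) : ℂ :=
  ∑ u : (ZMod q)ˣ, χ u * ZMod.stdAddChar (A * ((u⁻¹ : (ZMod q)ˣ) : ZMod q) + B * (u : ZMod q))

lemma norm_stdAddChar (q : ℕ) [NeZero q] (x : ZMod q) : ‖ZMod.stdAddChar x‖ = 1 := by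
  exact Circle.norm_coe (ZMod.toCircle x)

lemma KS_trivial (q : ℕ) [NeZero q] (χ : (ZMod q)ˣ → ℂ) (hχ : ∀ u, ‖χ u‖ ≤ 1) (A B : ZMod q) :
    ‖KS q χ A B‖ ≤ q := by
  unfold KS
  refine (norm_sum_le _ _).trans ?_
  refine (sum_le_sum (g := fun _ => (1 : ℝ)) fun u _ => ?_).trans ?_
  · rw [norm_mul, norm_stdAddChar, mul_one]; exact hχ u
  · simp only [sum_const, nsmul_eq_mul, mul_one]
    have := Nat.totient_le q
    rw [card_univ, ZMod.card_units_eq_totient]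
    exact_mod_cast this

lemma KS_symm (q : ℕ) [NeZero q] (χ : (ZMod q)ˣ → ℂ) (hχ : ∀ u, χ u⁻¹ = χ u) (A B : ZMod q) :
    KS q χ A B = KS q χ B A := by
  unfold KS
  rw [← Equiv.sum_comp (Equiv.inv (ZMod q)ˣ)]
  refine sum_congr rfl fun u _ => ?_
  simp only [Equiv.inv_apply, hχ, inv_inv]
  rw [add_comm]

lemma KS_sp (q : ℕ) [NeZero q] (χ : (ZMod q)ˣ → ℂ) (hχ : ∀ u, ‖χ u‖ ≤ 1) (A B P : ZMod q)
    (hP : IsNilpotent P) (hA : A * P ^ 2 = 0)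
    (hinv : ∀ u w : (ZMod q)ˣ, (∃ t, (w : ZMod q) = 1 + P * t) → χ (u * w) = χ u) :
    ‖KS q χ A B‖ ≤
      #{u : (ZMod q)ˣ | P * (B * (u : ZMod q) - A * ((u⁻¹ : (ZMod q)ˣ) : ZMod q)) = 0} := by
  have h1 : ∀ t : ZMod q, KS q χ A B = ∑ u : (ZMod q)ˣ,
      (χ u * ZMod.stdAddChar (A * ((u⁻¹ : (ZMod q)ˣ) : ZMod q) + B * (u : ZMod q))) *
      ZMod.stdAddChar (t * (P * (B * (u : ZMod q) - A * ((u⁻¹ : (ZMod q)ˣ) : ZMod q)))) := by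
    intro t
    have hu : IsUnit (1 + P * t) :=
      IsNilpotent.isUnit_one_add ((Commute.all P t).isNilpotent_mul_right hP)
    obtain ⟨w, hw⟩ := hu
    have hw1 : (w : ZMod q) * ((w⁻¹ : (ZMod q)ˣ) : ZMod q) = 1 := by simp
    have hwA : A * ((w⁻¹ : (ZMod q)ˣ) : ZMod q) = A * (1 - P * t) := by
      generalize ((w⁻¹ : (ZMod q)ˣ) : ZMod q) = w' at *
      rw [hw] at hw1
      linear_combination A * (1 - P * t) * hw1 + t ^ 2 * w' * hA
    unfold KS
    rw [← Equiv.sum_comp (Equiv.mulRight w)]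
    refine sum_congr rfl fun u _ => ?_
    simp only [Equiv.coe_mulRight, hinv u w ⟨t, hw⟩]
    rw [mul_assoc, ← AddChar.map_add_eq_mul]
    congr 2
    rw [mul_inv, Units.val_mul, Units.val_mul, hw]
    linear_combination ((u⁻¹ : (ZMod q)ˣ) : ZMod q) * hwA
  have h2 : (q : ℂ) * KS q χ A B = ∑ u : (ZMod q)ˣ,
      (χ u * ZMod.stdAddChar (A * ((u⁻¹ : (ZMod q)ˣ) : ZMod q) + B * (u : ZMod q))) *
      (if (P * (B * (u : ZMod q) - A * ((u⁻¹ : (ZMod q)ˣ) : ZMod q))) = 0 then (q : ℂ) else 0) := by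
    calc (q : ℂ) * KS q χ A B = ∑ t : ZMod q, KS q χ A B := by simp [ZMod.card]
      _ = _ := by
        rw [sum_congr rfl fun t _ => h1 t, sum_comm]
        refine sum_congr rfl fun u _ => ?_
        rw [← mul_sum, AddChar.sum_mulShift _ (ZMod.isPrimitive_stdAddChar q), ZMod.card]
        simp
  have hq : (q : ℂ) ≠ 0 := by exact_mod_cast NeZero.ne q
  have h3 : KS q χ A B = ∑ u ∈ univ.filter
      (fun u : (ZMod q)ˣ => P * (B * (u : ZMod q) - A * ((u⁻¹ : (ZMod q)ˣ) : ZMod q)) = 0),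
      (χ u * ZMod.stdAddChar (A * ((u⁻¹ : (ZMod q)ˣ) : ZMod q) + B * (u : ZMod q))) := by
    apply mul_left_cancel₀ hq
    rw [h2, sum_filter, mul_sum]
    refine sum_congr rfl fun u _ => ?_
    split_ifs <;> ring
  rw [h3]
  refine (norm_sum_le _ _).trans ?_
  refine (sum_le_sum (g := fun _ => (1 : ℝ)) fun u _ => ?_).trans ?_
  · rw [norm_mul, norm_stdAddChar, mul_one]; exact hχ u
  · simp

lemma stdAddChar_crt (m n : ℕ) [NeZero m] [NeZero n] (r s : ℤ) (h : r * n + s * m = 1)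
    (x : ZMod (m * n)) :
    ZMod.stdAddChar x = ZMod.stdAddChar ((r : ZMod m) * ZMod.castHom (dvd_mul_right m n) (ZMod m) x) *
      ZMod.stdAddChar ((s : ZMod n) * ZMod.castHom (dvd_mul_left n m) (ZMod n) x) := by
  obtain ⟨j, rfl⟩ := ZMod.intCast_surjective x
  simp only [map_intCast, ← Int.cast_mul]
  rw [ZMod.stdAddChar_coe, ZMod.stdAddChar_coe, ZMod.stdAddChar_coe, ← Complex.exp_add]
  congr 1
  have hm : (m : ℂ) ≠ 0 := by exact_mod_cast NeZero.ne m
  have hn : (n : ℂ) ≠ 0 := by exact_mod_cast NeZero.ne n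
  have h' : (r : ℂ) * n + s * m = 1 := by exact_mod_cast h
  push_cast
  field_simp
  linear_combination -(j : ℂ) * h'

lemma units_crt_bij (m n : ℕ) [NeZero m] [NeZero n] (hmn : Nat.Coprime m n) :
    Function.Bijective (fun u : (ZMod (m * n))ˣ =>
      (ZMod.unitsMap (dvd_mul_right m n) u, ZMod.unitsMap (dvd_mul_left n m) u)) := by
  rw [Fintype.bijective_iff_injective_and_card]
  constructor
  · intro u w huw
    simp only [Prod.mk.injEq] at huw
    ext
    apply (ZMod.chineseRemainder hmn).injective
    have h1 := congrArg (Units.val) huw.1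
    have h2 := congrArg (Units.val) huw.2
    have e : ∀ x : ZMod (m * n), ZMod.chineseRemainder hmn x =
        (ZMod.castHom (dvd_mul_right m n) (ZMod m) x, ZMod.castHom (dvd_mul_left n m) (ZMod n) x) := by
      intro x
      obtain ⟨j, rfl⟩ := ZMod.intCast_surjective x
      simp only [map_intCast]; rfl
    rw [e, e]
    exact Prod.ext h1 h2
  · rw [Fintype.card_prod, ZMod.card_units_eq_totient, ZMod.card_units_eq_totient,
      ZMod.card_units_eq_totient, Nat.totient_mul hmn]

lemma KS_crt (m n : ℕ) [NeZero m] [NeZero n] (hmn : Nat.Coprime m n)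
    (r s : ℤ) (h : r * n + s * m = 1)
    (χ : (ZMod (m * n))ˣ → ℂ) (χ₁ : (ZMod m)ˣ → ℂ) (χ₂ : (ZMod n)ˣ → ℂ)
    (hχ : ∀ u, χ u = χ₁ (ZMod.unitsMap (dvd_mul_right m n) u) * χ₂ (ZMod.unitsMap (dvd_mul_left n m) u))
    (A B : ℤ) :
    KS (m * n) χ (A : ZMod (m * n)) (B : ZMod (m * n)) =
      KS m χ₁ ((r * A : ℤ) : ZMod m) ((r * B : ℤ) : ZMod m) *
      KS n χ₂ ((s * A : ℤ) : ZMod n) ((s * B : ℤ) : ZMod n) := by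
  unfold KS
  rw [sum_mul_sum, ← sum_product', univ_product_univ]
  refine Fintype.sum_bijective _ (units_crt_bij m n hmn) _ _ fun u => ?_
  simp only
  rw [hχ, stdAddChar_crt m n r s h]
  rw [mul_mul_mul_comm]
  have e1 : ∀ u : (ZMod (m * n))ˣ, ((ZMod.unitsMap (dvd_mul_right m n) u : (ZMod m)ˣ) : ZMod m) =
    ZMod.castHom (dvd_mul_right m n) (ZMod m) (u : ZMod (m * n)) := fun _ => rfl
  have e2 : ∀ u : (ZMod (m * n))ˣ, ((ZMod.unitsMap (dvd_mul_left n m) u : (ZMod n)ˣ) : ZMod n) =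
    ZMod.castHom (dvd_mul_left n m) (ZMod n) (u : ZMod (m * n)) := fun _ => rfl
  rw [← map_inv, ← map_inv, e1, e1, e2, e2]
  congr 3
  · simp only [map_add, map_mul, map_intCast, Int.cast_mul]; ring
  · simp only [map_add, map_mul, map_intCast, Int.cast_mul]; ring
/-! ### Part 3: Salié sums modulo odd prime powers -/

open NumberTheorySymbols in
/-- The Jacobi symbol `(u | q)` as a function on the units modulo `q`. -/
noncomputable def chiJ (q : ℕ) (u : (ZMod q)ˣ) : ℂ := ((J((((u : ZMod q).val : ℕ) : ℤ) | q) : ℤ) : ℂ)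

open NumberTheorySymbols in
lemma chiJ_int (q : ℕ) [NeZero q] (u : (ZMod q)ˣ) (j : ℤ) (h : (j : ZMod q) = u) :
    chiJ q u = ((J(j | q) : ℤ) : ℂ) := by
  unfold chiJ
  congr 1
  apply jacobiSym.mod_left'
  have : (((((u : ZMod q).val : ℕ) : ℤ)) : ZMod q) = (j : ZMod q) := by
    rw [h]; simp
  exact (ZMod.intCast_eq_intCast_iff' _ _ _).mp this

lemma exists_int_unit (q : ℕ) [NeZero q] (u : (ZMod q)ˣ) : ∃ j : ℤ, (j : ZMod q) = u ∧ j.gcd q = 1 := by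
  refine ⟨((u : ZMod q).val : ℕ), by simp, ?_⟩
  have := ZMod.val_coe_unit_coprime u
  rwa [Int.gcd_natCast_natCast]

lemma chiJ_mul (q : ℕ) [NeZero q] (u w : (ZMod q)ˣ) : chiJ q (u * w) = chiJ q u * chiJ q w := by
  obtain ⟨j, hj, _⟩ := exists_int_unit q u
  obtain ⟨k, hk, _⟩ := exists_int_unit q w
  rw [chiJ_int q u j hj, chiJ_int q w k hk, chiJ_int q (u * w) (j * k) (by push_cast; rw [hj, hk]),
    jacobiSym.mul_left]
  push_cast; rfl

lemma chiJ_one_or (q : ℕ) [NeZero q] (u : (ZMod q)ˣ) : chiJ q u = 1 ∨ chiJ q u = -1 := by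
  obtain ⟨j, hj, hg⟩ := exists_int_unit q u
  rw [chiJ_int q u j hj]
  rcases jacobiSym.eq_one_or_neg_one hg with h | h <;> rw [h] <;> simp

lemma chiJ_norm (q : ℕ) [NeZero q] (u : (ZMod q)ˣ) : ‖chiJ q u‖ = 1 := by
  rcases chiJ_one_or q u with h | h <;> rw [h] <;> simp

lemma chiJ_inv (q : ℕ) [NeZero q] (u : (ZMod q)ˣ) : chiJ q u⁻¹ = chiJ q u := by
  have h : chiJ q u⁻¹ * chiJ q u = chiJ q 1 := by rw [← chiJ_mul]; simp
  have h1 : chiJ q 1 = 1 := by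
    rw [chiJ_int q 1 1 (by simp)]; simp
  rcases chiJ_one_or q u with h2 | h2 <;> rw [h2, h1] at h <;> rw [h2]
  · simpa using h
  · linear_combination -h

/-- If `w ≡ 1` modulo `p`, the symbol modulo `p ^ a` is trivial. -/
lemma chiJ_pow_one (p a : ℕ) [Fact p.Prime] (w : (ZMod (p ^ a))ˣ) (j : ℤ) (hj : (j : ZMod (p ^ a)) = w)
    (h : (p : ℤ) ∣ j - 1) : chiJ (p ^ a) w = 1 := by
  rw [chiJ_int _ w j hj, jacobiSym.pow_right]
  have : jacobiSym j p = jacobiSym 1 p := by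
    apply jacobiSym.mod_left'
    exact Int.emod_eq_emod_iff_emod_sub_eq_zero.mpr (Int.emod_eq_zero_of_dvd h)
  rw [this]; simp

lemma sum_range_periodic (n k : ℕ) (f : ℕ → ℂ) (hf : ∀ i, f (i + n) = f i) :
    ∑ i ∈ range (k * n), f i = k * ∑ i ∈ range n, f i := by
  have h : ∀ k i, f (k * n + i) = f i := by
    intro k i
    induction k with
    | zero => simp
    | succ k ih => rw [← ih, ← hf (k * n + i)]; congr 1; ring
  induction k with
  | zero => simp
  | succ k ih =>
    rw [add_mul, one_mul, sum_range_add, ih]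
    simp only [h]
    push_cast; ring

lemma sum_zmod_range (q : ℕ) [NeZero q] (f : ZMod q → ℂ) :
    ∑ x : ZMod q, f x = ∑ i ∈ range q, f (i : ZMod q) := by
  symm
  refine sum_bij (fun i _ => (i : ZMod q)) (fun _ _ => mem_univ _) ?_ ?_ (fun _ _ => rfl)
  · intro i hi j hj hij
    have := (ZMod.natCast_eq_natCast_iff' _ _ _).mp hij
    rwa [Nat.mod_eq_of_lt (by simpa using hi), Nat.mod_eq_of_lt (by simpa using hj)] at this
  · intro x _
    exact ⟨x.val, by simpa using ZMod.val_lt x, by simp⟩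

/-- Quadratic Gauss sums. -/
noncomputable def Gam (q : ℕ) [NeZero q] (u : ZMod q) : ℂ := ∑ x : ZMod q, ZMod.stdAddChar (u * x ^ 2)

lemma stdAddChar_mul (q k : ℕ) [NeZero q] [NeZero k] (j : ℤ) :
    ZMod.stdAddChar ((k * j : ℤ) : ZMod (k * q)) = ZMod.stdAddChar (j : ZMod q) := by
  rw [ZMod.stdAddChar_coe, ZMod.stdAddChar_coe]
  congr 1
  have hk : (k : ℂ) ≠ 0 := by exact_mod_cast NeZero.ne k
  have hq : (q : ℂ) ≠ 0 := by exact_mod_cast NeZero.ne q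
  push_cast; field_simp

lemma Gam_restrict (q : ℕ) [NeZero q] (u P : ZMod q) (hP : P ^ 2 = 0) :
    Gam q u = ∑ x : ZMod q, if 2 * u * P * x = 0 then ZMod.stdAddChar (u * x ^ 2) else 0 := by
  have h1 : ∀ t : ZMod q, Gam q u = ∑ x : ZMod q,
      ZMod.stdAddChar (u * x ^ 2) * ZMod.stdAddChar (t * (2 * u * P * x)) := by
    intro t
    unfold Gam
    rw [← Equiv.sum_comp (Equiv.addRight (P * t))]
    refine sum_congr rfl fun x _ => ?_
    rw [← AddChar.map_add_eq_mul]
    congr 1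
    simp only [Equiv.coe_addRight]
    linear_combination u * t ^ 2 * hP
  have hq : (q : ℂ) ≠ 0 := by exact_mod_cast NeZero.ne q
  apply mul_left_cancel₀ hq
  calc (q : ℂ) * Gam q u = ∑ t : ZMod q, Gam q u := by simp [ZMod.card]
    _ = _ := by
      rw [sum_congr rfl fun t _ => h1 t, sum_comm, mul_sum]
      refine sum_congr rfl fun u _ => ?_
      rw [← mul_sum, AddChar.sum_mulShift _ (ZMod.isPrimitive_stdAddChar q), ZMod.card]
      split_ifs <;> simp [mul_comm]

lemma Gam_rec (p a : ℕ) [Fact p.Prime] (hp2 : p ≠ 2) (u : ℤ) (hu : ¬ (p : ℤ) ∣ u) :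
    Gam (p ^ (a + 2)) (u : ZMod (p ^ (a + 2))) = p * Gam (p ^ a) (u : ZMod (p ^ a)) := by
  have hp : p.Prime := Fact.out
  have hp0 : 0 < p := hp.pos
  have hz : ∀ j : ℤ, ((j : ℤ) : ZMod (p ^ (a + 2))) = 0 ↔ (p : ℤ) ^ (a + 2) ∣ j := by
    intro j
    rw [ZMod.intCast_zmod_eq_zero_iff_dvd]; push_cast; rfl
  rw [Gam_restrict _ _ ((p ^ (a + 1) : ℕ) : ZMod (p ^ (a + 2)))
    (by rw [← Nat.cast_pow, ZMod.natCast_eq_zero_iff, ← pow_mul]; exact pow_dvd_pow _ (by omega))]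
  rw [sum_zmod_range]
  have hcond : ∀ i : ℕ, (2 * (u : ZMod (p ^ (a + 2))) * ((p ^ (a + 1) : ℕ) : ZMod (p ^ (a + 2))) * (i : ZMod (p ^ (a + 2))) = 0) ↔ p ∣ i := by
    intro i
    have := hz (2 * u * (p ^ (a + 1) : ℕ) * i)
    push_cast at this ⊢
    rw [this]
    have hpi : Prime (p : ℤ) := Nat.prime_iff_prime_int.mp hp
    have e : (2 : ℤ) * u * p ^ (a + 1) * i = p ^ (a + 1) * (2 * u * i) := by ring
    have e2 : (p : ℤ) ^ (a + 2) = p ^ (a + 1) * p := by ring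
    rw [e, e2, mul_dvd_mul_iff_left (by positivity), hpi.dvd_mul, hpi.dvd_mul]
    have h2 : ¬ (p : ℤ) ∣ 2 := by
      intro h
      have : p ∣ 2 := by exact_mod_cast h
      exact hp2 ((Nat.prime_dvd_prime_iff_eq hp Nat.prime_two).mp this)
    simp only [h2, hu, false_or]
    exact Int.natCast_dvd_natCast
  simp only [hcond]
  have hre : ∑ x ∈ range (p ^ (a + 2)), (if p ∣ x then ZMod.stdAddChar ((u : ZMod (p ^ (a + 2))) * (x : ZMod (p ^ (a + 2))) ^ 2) else 0)
    = ∑ y ∈ range (p ^ (a + 1)), ZMod.stdAddChar ((u : ZMod (p ^ (a + 2))) * ((p * y : ℕ) : ZMod (p ^ (a + 2))) ^ 2) := by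
    rw [← sum_filter]
    symm
    refine sum_bij (fun y _ => p * y) ?_ ?_ ?_ (fun _ _ => rfl)
    · intro y hy
      simp only [mem_filter, mem_range] at hy ⊢
      refine ⟨?_, dvd_mul_right _ _⟩
      calc p * y < p * p ^ (a + 1) := Nat.mul_lt_mul_of_pos_left hy hp0
        _ = _ := by ring
    · intro y _ z _ h
      exact Nat.eq_of_mul_eq_mul_left hp0 h
    · intro x hx
      simp only [mem_filter, mem_range] at hx
      obtain ⟨hx1, y, rfl⟩ := hx
      refine ⟨y, ?_, rfl⟩
      simp only [mem_range]
      have : p ^ (a + 2) = p * p ^ (a + 1) := by ring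
      rw [this] at hx1
      exact Nat.lt_of_mul_lt_mul_left hx1
  rw [hre]
  have hterm : ∀ y : ℕ, ZMod.stdAddChar ((u : ZMod (p ^ (a + 2))) * ((p * y : ℕ) : ZMod (p ^ (a + 2))) ^ 2)
      = ZMod.stdAddChar ((u : ZMod (p ^ a)) * (y : ZMod (p ^ a)) ^ 2) := by
    intro y
    have h1 := ZMod.stdAddChar_coe (N := p ^ (a + 2)) (u * (p * y) ^ 2)
    have h2 := ZMod.stdAddChar_coe (N := p ^ a) (u * y ^ 2)
    push_cast at h1 h2 ⊢
    rw [h1, h2]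
    congr 1
    have : (p : ℂ) ≠ 0 := by exact_mod_cast hp0.ne'
    field_simp
    ring
  simp only [hterm]
  have e : p ^ (a + 1) = p * p ^ a := by ring
  rw [e, sum_range_periodic, Gam, sum_zmod_range]
  intro i
  congr 2
  push_cast
  have : (p : ZMod (p ^ a)) ^ a = 0 := by
    rw [← Nat.cast_pow]; simp
  rw [this]; simp

lemma Gam_prime (p : ℕ) [Fact p.Prime] (hp2 : p ≠ 2) (u : ZMod p) (hu : u ≠ 0) :
    Gam p u = ∑ y : ZMod p, ((quadraticChar (ZMod p) y : ℤ) : ℂ) * ZMod.stdAddChar (u * y) := by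
  have hF : ringChar (ZMod p) ≠ 2 := by rwa [ZMod.ringChar_zmod_n]
  unfold Gam
  have e1 : ∑ x : ZMod p, ZMod.stdAddChar (u * x ^ 2) =
      ∑ y : ZMod p, ∑ x : ZMod p with x ^ 2 = y, ZMod.stdAddChar (u * x ^ 2) :=
    (sum_fiberwise _ _ _).symm
  rw [e1]
  have e2 : ∀ y : ZMod p, ∑ x : ZMod p with x ^ 2 = y, ZMod.stdAddChar (u * x ^ 2) =
      (((quadraticChar (ZMod p) y : ℤ) : ℂ) + 1) * ZMod.stdAddChar (u * y) := by
    intro y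
    have h := quadraticChar_card_sqrts hF y
    have h' : ((#{x : ZMod p | x ^ 2 = y} : ℕ) : ℂ) = ((quadraticChar (ZMod p) y : ℤ) : ℂ) + 1 := by
      have := congrArg (Int.cast : ℤ → ℂ) h
      push_cast at this
      rw [← this]
      congr 2
      ext x; simp
    rw [← h', sum_congr rfl (g := fun _ => ZMod.stdAddChar (u * y)), sum_const, nsmul_eq_mul]
    intro x hx
    rw [(mem_filter.mp hx).2]
  rw [sum_congr rfl fun y _ => e2 y]
  simp only [add_mul, one_mul, sum_add_distrib]
  have : ∑ x : ZMod p, ZMod.stdAddChar (u * x) = 0 := by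
    have := AddChar.sum_mulShift u (ZMod.isPrimitive_stdAddChar p)
    simp only [mul_comm _ u, hu, if_false] at this
    simpa using this
  rw [this, add_zero]

lemma Gam_prime_norm (p : ℕ) [Fact p.Prime] (hp2 : p ≠ 2) : ‖Gam p 1‖ ^ 2 = p := by
  have hF : ringChar (ZMod p) ≠ 2 := by rwa [ZMod.ringChar_zmod_n]
  have h1 : ((quadraticChar (ZMod p)).ringHomComp (Int.castRingHom ℂ)) ≠ 1 := by
    rw [Ne, MulChar.ringHomComp_eq_one_iff (RingHom.injective_int _)]
    exact quadraticChar_ne_one hF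
  have h2 : ((quadraticChar (ZMod p)).ringHomComp (Int.castRingHom ℂ)).IsQuadratic :=
    (quadraticChar_isQuadratic (ZMod p)).comp _
  have h := gaussSum_sq h1 h2 (ZMod.isPrimitive_stdAddChar p)
  have e : Gam p 1 = gaussSum ((quadraticChar (ZMod p)).ringHomComp (Int.castRingHom ℂ)) ZMod.stdAddChar := by
    rw [Gam_prime p hp2 1 one_ne_zero]
    unfold gaussSum
    refine sum_congr rfl fun y _ => ?_
    simp
  rw [← e] at h
  rw [← norm_pow, h, norm_mul, ZMod.card]
  rcases h2 (-1) with h3 | h3 | h3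
  · exfalso
    rw [h3] at h
    have : IsUnit (((quadraticChar (ZMod p)).ringHomComp (Int.castRingHom ℂ)) (-1)) :=
      (IsUnit.neg isUnit_one).map _
    rw [h3] at this
    simp at this
  · rw [h3]; simp
  · rw [h3]; simp

lemma Gam_prime_mul (p : ℕ) [Fact p.Prime] (hp2 : p ≠ 2) (u : ℤ) (hu : ¬ (p : ℤ) ∣ u) :
    Gam p (u : ZMod p) = ((jacobiSym u p : ℤ) : ℂ) * Gam p 1 := by
  have hu0 : (u : ZMod p) ≠ 0 := by
    rwa [Ne, ZMod.intCast_zmod_eq_zero_iff_dvd]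
  rw [Gam_prime p hp2 _ hu0, Gam_prime p hp2 1 one_ne_zero]
  rw [← Equiv.sum_comp (Equiv.mulLeft₀ (u : ZMod p) hu0) (fun y => ((quadraticChar (ZMod p) y : ℤ) : ℂ) * ZMod.stdAddChar (1 * y))]
  rw [mul_sum]
  refine sum_congr rfl fun y _ => ?_
  simp only [Equiv.mulLeft₀_apply, one_mul, map_mul]
  rw [← jacobiSym.legendreSym.to_jacobiSym]
  have : ((quadraticChar (ZMod p)) (u : ZMod p)) = legendreSym p u := rfl
  rw [this]
  have h2 : (legendreSym p u) ^ 2 = 1 := legendreSym.sq_one p hu0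
  have h2' : ((legendreSym p u : ℤ) : ℂ) ^ 2 = 1 := by exact_mod_cast h2
  push_cast
  linear_combination -((quadraticChar (ZMod p) y : ℤ) : ℂ) * ZMod.stdAddChar ((u : ZMod p) * y) * h2'

lemma Gam_pow (p : ℕ) [Fact p.Prime] (hp2 : p ≠ 2) (a : ℕ) :
    (∀ u : ℤ, ¬ (p : ℤ) ∣ u → Gam (p ^ a) (u : ZMod (p ^ a)) = ((jacobiSym u (p ^ a) : ℤ) : ℂ) * Gam (p ^ a) 1) ∧
    ‖Gam (p ^ a) 1‖ ^ 2 = (p : ℝ) ^ a := by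
  have hp : p.Prime := Fact.out
  have h1p : ¬ (p : ℤ) ∣ 1 := fun h => hp.one_lt.ne' (by exact_mod_cast Int.eq_one_of_dvd_one (by positivity) h)
  induction a using Nat.twoStepInduction with
  | zero =>
    have : ∀ x : ZMod (p ^ 0), x = 0 := by
      intro x
      have : Subsingleton (ZMod (p ^ 0)) := by rw [pow_zero]; infer_instance
      exact Subsingleton.elim _ _
    constructor
    · intro u _
      rw [this (u : ZMod (p ^ 0)), this 1]; simp
    · unfold Gam
      have e : ∀ x : ZMod (p ^ 0), ZMod.stdAddChar (1 * x ^ 2) = 1 := by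
        intro x; rw [this (1 * x ^ 2)]; exact AddChar.map_zero_eq_one _
      simp only [e, sum_const, card_univ, ZMod.card]; simp
  | one =>
    have key : ∀ q : ℕ, q = p → ∀ [NeZero q], (∀ u : ℤ, ¬ (p : ℤ) ∣ u → Gam q (u : ZMod q) = ((jacobiSym u q : ℤ) : ℂ) * Gam q 1) ∧ ‖Gam q 1‖ ^ 2 = (p : ℝ) ^ 1 := by
      intro q hq _
      subst hq
      exact ⟨fun u hu => Gam_prime_mul q hp2 u hu, by rw [Gam_prime_norm q hp2, pow_one]⟩
    exact key (p ^ 1) (pow_one p)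
  | more a ih _ =>
    have e1 := Gam_rec p a hp2 1 h1p
    rw [Int.cast_one, Int.cast_one] at e1
    constructor
    · intro u hu
      rw [Gam_rec p a hp2 u hu, ih.1 u hu, e1, jacobiSym.pow_right, jacobiSym.pow_right, pow_add]
      have h2 : (jacobiSym u p) ^ 2 = 1 := by
        rw [← jacobiSym.legendreSym.to_jacobiSym]
        exact legendreSym.sq_one p (by rwa [Ne, ZMod.intCast_zmod_eq_zero_iff_dvd])
      rw [h2]; push_cast; ring
    · rw [e1, norm_mul, mul_pow, ih.2]; simp; ring

lemma nonunit_mul (p a : ℕ) [Fact p.Prime] (d : ZMod (p ^ (a + 1))) (hd : ¬ IsUnit d) :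
    d * ((p ^ a : ℕ) : ZMod (p ^ (a + 1))) = 0 := by
  have hp : p.Prime := Fact.out
  have h1 : p ∣ d.val := by
    by_contra h
    apply hd
    have : Nat.Coprime d.val (p ^ (a + 1)) :=
      Nat.Coprime.pow_right _ ((Nat.Prime.coprime_iff_not_dvd hp).mpr h).symm
    have := (ZMod.isUnit_iff_coprime d.val (p ^ (a + 1))).mpr this
    simpa using this
  obtain ⟨k, hk⟩ := h1
  have : d = ((p * k : ℕ) : ZMod (p ^ (a + 1))) := by rw [← hk]; simp
  rw [this, ← Nat.cast_mul, ZMod.natCast_eq_zero_iff]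
  exact ⟨k, by ring⟩

lemma prime_pow_not_zero (p a : ℕ) [Fact p.Prime] (hp2 : p ≠ 2) (A : (ZMod (p ^ (a + 1)))ˣ) :
    -(2 * (A : ZMod (p ^ (a + 1))) * ((p ^ a : ℕ) : ZMod (p ^ (a + 1)))) ≠ 0 := by
  have hp : p.Prime := Fact.out
  have h2 : IsUnit (2 : ZMod (p ^ (a + 1))) := by
    have := (ZMod.isUnit_iff_coprime 2 (p ^ (a + 1))).mpr
      (Nat.Coprime.pow_right _ ((Nat.coprime_primes Nat.prime_two hp).mpr (Ne.symm hp2)))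
    simpa using this
  rw [neg_ne_zero, Ne, (h2.mul A.isUnit).mul_right_eq_zero, ZMod.natCast_eq_zero_iff]
  intro h
  have := (Nat.pow_dvd_pow_iff_le_right hp.one_lt).mp h
  omega

lemma salie_aux (q : ℕ) [NeZero q] (A : (ZMod q)ˣ) (B P : ZMod q) (G : ℂ)
    (hG : ∀ u : (ZMod q)ˣ, Gam q (u : ZMod q) = chiJ q u * G) (hG2 : ‖G‖ ^ 2 = (q : ℝ))
    (hdP0 : ∀ d : ZMod q, ¬ IsUnit d → d * P = 0) (hA : -(2 * (A : ZMod q) * P) ≠ 0) :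
    ‖KS q (chiJ q) A B‖ ≤ Real.sqrt (q : ℝ) * #{y : ZMod q | (A : ZMod q) * y ^ 2 = B} := by
  have hGpos : 0 < ‖G‖ := by
    rcases (norm_nonneg G).lt_or_eq with h | h
    · exact h
    · exfalso
      rw [← h] at hG2
      have : (0 : ℝ) < (q : ℝ) := by exact_mod_cast NeZero.pos q
      rw [← hG2] at this
      norm_num at this
  have hsum : ∀ d : (ZMod q)ˣ, (chiJ q (-A) * G) * (chiJ q d * ZMod.stdAddChar ((A : ZMod q) * ((d⁻¹ : (ZMod q)ˣ) : ZMod q) + B * (d : ZMod q)))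
      = ∑ y : ZMod q, ZMod.stdAddChar (-(2 * (A : ZMod q) * y)) * ZMod.stdAddChar ((d : ZMod q) * (B - (A : ZMod q) * y ^ 2)) := by
    intro d
    have e1 : chiJ q (-A) * G * chiJ q d = ∑ x : ZMod q, ZMod.stdAddChar (((-A * d⁻¹ : (ZMod q)ˣ) : ZMod q) * x ^ 2) := by
      have := hG (-A * d⁻¹)
      rw [chiJ_mul, chiJ_inv] at this
      unfold Gam at this
      rw [this]; ring
    rw [← mul_assoc, e1, sum_mul]
    have e2 := Equiv.sum_comp ((Units.mulRight d).trans (Equiv.addLeft (1 : ZMod q))) (fun x => ZMod.stdAddChar (((-A * d⁻¹ : (ZMod q)ˣ) : ZMod q) * x ^ 2) *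
      ZMod.stdAddChar ((A : ZMod q) * ((d⁻¹ : (ZMod q)ˣ) : ZMod q) + B * (d : ZMod q)))
    rw [← e2]
    refine sum_congr rfl fun y _ => ?_
    simp only [Equiv.trans_apply, Units.mulRight_apply, Equiv.coe_addLeft]
    rw [← AddChar.map_add_eq_mul, ← AddChar.map_add_eq_mul]
    congr 1
    have hd : (d : ZMod q) * ((d⁻¹ : (ZMod q)ˣ) : ZMod q) = 1 := by simp
    push_cast
    generalize ((d⁻¹ : (ZMod q)ˣ) : ZMod q) = d' at *
    linear_combination (-2 * (A : ZMod q) * y - A * y ^ 2 * d) * hd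
  have htot : (chiJ q (-A) * G) * KS q (chiJ q) A B = ∑ y : ZMod q, ZMod.stdAddChar (-(2 * (A : ZMod q) * y)) *
      (if B - (A : ZMod q) * y ^ 2 = 0 then (q : ℂ) else 0) := by
    unfold KS
    rw [mul_sum, sum_congr rfl fun d _ => hsum d]
    have hext : ∑ d : (ZMod q)ˣ, ∑ y : ZMod q, ZMod.stdAddChar (-(2 * (A : ZMod q) * y)) * ZMod.stdAddChar ((d : ZMod q) * (B - (A : ZMod q) * y ^ 2)) =
        ∑ d : ZMod q, ∑ y : ZMod q, ZMod.stdAddChar (-(2 * (A : ZMod q) * y)) * ZMod.stdAddChar ((d : ZMod q) * (B - (A : ZMod q) * y ^ 2)) := by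
      refine Fintype.sum_of_injective (Units.val) Units.val_injective _ _ ?_ (fun _ => rfl)
      intro d hd
      have hd' : ¬ IsUnit d := by
        rintro ⟨u, rfl⟩; exact hd ⟨u, rfl⟩
      have hdP := hdP0 d hd'
      have hne : ZMod.stdAddChar (-(2 * (A : ZMod q) * P)) ≠ 1 := by
        intro h
        rw [← AddChar.map_zero_eq_one (ZMod.stdAddChar (N := q))] at h
        exact hA (ZMod.injective_stdAddChar h)
      have hS : ∑ y : ZMod q, ZMod.stdAddChar (-(2 * (A : ZMod q) * y)) * ZMod.stdAddChar (d * (B - (A : ZMod q) * y ^ 2)) =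
        ZMod.stdAddChar (-(2 * (A : ZMod q) * P)) * ∑ y : ZMod q, ZMod.stdAddChar (-(2 * (A : ZMod q) * y)) * ZMod.stdAddChar (d * (B - (A : ZMod q) * y ^ 2)) := by
        conv_lhs => rw [← Equiv.sum_comp (Equiv.addRight P)]
        rw [mul_sum]
        refine sum_congr rfl fun y _ => ?_
        simp only [Equiv.coe_addRight]
        rw [← AddChar.map_add_eq_mul, ← AddChar.map_add_eq_mul, ← AddChar.map_add_eq_mul]
        congr 1
        linear_combination (-A * (2 * y + P) : ZMod q) * hdP
      have : (1 - ZMod.stdAddChar (-(2 * (A : ZMod q) * P))) * ∑ y : ZMod q, ZMod.stdAddChar (-(2 * (A : ZMod q) * y)) * ZMod.stdAddChar (d * (B - (A : ZMod q) * y ^ 2)) = 0 := by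
        rw [sub_mul, ← hS]; ring
      rcases mul_eq_zero.mp this with h | h
      · exact absurd (sub_eq_zero.mp h).symm hne
      · exact h
    rw [hext, sum_comm]
    refine sum_congr rfl fun y _ => ?_
    rw [← mul_sum, AddChar.sum_mulShift _ (ZMod.isPrimitive_stdAddChar q), ZMod.card]
    simp
  have hnorm : ‖G‖ * ‖KS q (chiJ q) A B‖ ≤ q * #{y : ZMod q | (A : ZMod q) * y ^ 2 = B} := by
    have := congrArg norm htot
    rw [norm_mul, norm_mul, chiJ_norm, one_mul] at this
    rw [this]
    refine (norm_sum_le _ _).trans ?_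
    refine (sum_le_sum (g := fun y => if (A : ZMod q) * y ^ 2 = B then (q : ℝ) else 0) fun y _ => ?_).trans ?_
    · rw [norm_mul, norm_stdAddChar, one_mul]
      by_cases h : (A : ZMod q) * y ^ 2 = B
      · simp [h]
      · rw [if_neg h, if_neg (fun hh => h (sub_eq_zero.mp hh).symm)]; simp
    · rw [← sum_filter, sum_const, nsmul_eq_mul, mul_comm]
  have hqR : (q : ℝ) = ‖G‖ * ‖G‖ := by rw [← sq, hG2]
  have hGs : ‖G‖ = Real.sqrt (q : ℝ) := by
    rw [← hG2, Real.sqrt_sq (norm_nonneg _)]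
  rw [hqR, mul_assoc] at hnorm
  rw [← hGs]
  exact le_of_mul_le_mul_left hnorm hGpos

lemma salie (p a : ℕ) [Fact p.Prime] (hp2 : p ≠ 2) (A : (ZMod (p ^ (a + 1)))ˣ) (B : ZMod (p ^ (a + 1))) :
    ‖KS (p ^ (a + 1)) (chiJ (p ^ (a + 1))) A B‖ ≤
      Real.sqrt ((p ^ (a + 1) : ℕ) : ℝ) * #{y : ZMod (p ^ (a + 1)) | (A : ZMod (p ^ (a + 1))) * y ^ 2 = B} := by
  have hp : p.Prime := Fact.out
  obtain ⟨hG1, hG2⟩ := Gam_pow p hp2 (a + 1)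
  have hG : ∀ u : (ZMod (p ^ (a + 1)))ˣ, Gam (p ^ (a + 1)) (u : ZMod (p ^ (a + 1))) =
      chiJ (p ^ (a + 1)) u * Gam (p ^ (a + 1)) 1 := by
    intro u
    obtain ⟨j, hj, hg⟩ := exists_int_unit _ u
    rw [chiJ_int _ u j hj, ← hj]
    apply hG1
    intro h
    have : (p : ℤ) ∣ (Int.gcd j ((p ^ (a + 1) : ℕ) : ℤ) : ℤ) := by
      apply Int.dvd_coe_gcd h
      push_cast
      exact dvd_pow_self _ (by omega)
    rw [hg] at this
    exact hp.one_lt.ne' (by exact_mod_cast Int.eq_one_of_dvd_one (by positivity) this)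
  exact salie_aux _ A B _ _ hG (by rw [hG2]; push_cast; rfl) (nonunit_mul p a) (prime_pow_not_zero p a hp2 A)
/-! ### Part 4: bounds modulo odd prime powers -/

lemma isUnit_cast_pow (p a : ℕ) [Fact p.Prime] (j : ℤ) (hj : ¬ (p : ℤ) ∣ j) :
    IsUnit (j : ZMod (p ^ a)) := by
  have hp : p.Prime := Fact.out
  rw [ZMod.coe_int_isUnit_iff_isCoprime]
  push_cast
  exact (IsCoprime.pow_left ((Nat.prime_iff_prime_int.mp hp).coprime_iff_not_dvd.mpr hj))

lemma card_smul_zero (q n : ℕ) [NeZero q] (hn : 0 < n) (w₀ : ZMod q) :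
    #{w : ZMod q | (n : ZMod q) * (w - w₀) = 0} ≤ n := by
  have h := IsAddCyclic.card_nsmul_eq_zero_le (α := ZMod q) hn
  refine le_trans ?_ h
  refine card_le_card_of_injOn (fun w => w - w₀) ?_ ?_
  · intro w hw
    simp only [coe_filter, mem_univ, true_and, Set.mem_ofPred_eq] at hw ⊢
    rw [nsmul_eq_mul, hw]
  · intro a _ b _ hab
    simpa using hab

lemma count_ratio (q : ℕ) [NeZero q] (A B P : ZMod q) :
    #{u : (ZMod q)ˣ | P * (B * (u : ZMod q) - A * ((u⁻¹ : (ZMod q)ˣ) : ZMod q)) = 0} ≤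
      #{w : ZMod q | P * B * (w ^ 2 - 1) = 0} := by
  rcases Finset.eq_empty_or_nonempty
    (univ.filter fun u : (ZMod q)ˣ => P * (B * (u : ZMod q) - A * ((u⁻¹ : (ZMod q)ˣ) : ZMod q)) = 0)
    with h | ⟨u₀, hu₀⟩
  · rw [h]; simp
  · have hu0 := (mem_filter.mp hu₀).2
    refine card_le_card_of_injOn (fun u => (u : ZMod q) * ((u₀⁻¹ : (ZMod q)ˣ) : ZMod q)) ?_ ?_
    · intro u hu
      simp only [coe_filter, mem_univ, true_and, Set.mem_ofPred_eq] at hu ⊢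
      have e1 : (u : ZMod q) * ((u⁻¹ : (ZMod q)ˣ) : ZMod q) = 1 := by simp
      have e2 : (u₀ : ZMod q) * ((u₀⁻¹ : (ZMod q)ˣ) : ZMod q) = 1 := by simp
      generalize ((u⁻¹ : (ZMod q)ˣ) : ZMod q) = x at *
      generalize ((u₀⁻¹ : (ZMod q)ˣ) : ZMod q) = y at *
      generalize (u : ZMod q) = z at *
      generalize (u₀ : ZMod q) = t at *
      have h1 : P * B * z ^ 2 = P * A := by linear_combination z * hu + P * A * e1
      have h2 : P * B * t ^ 2 = P * A := by linear_combination t * hu0 + P * A * e2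
      linear_combination y ^ 2 * h1 - y ^ 2 * h2 + P * B * (t * y + 1) * e2
    · intro a _ b _ hab
      exact Units.ext ((u₀⁻¹).isUnit.mul_left_injective hab)

lemma two_isUnit (p a : ℕ) [Fact p.Prime] (hp2 : p ≠ 2) : IsUnit (2 : ZMod (p ^ a)) := by
  have hp : p.Prime := Fact.out
  have := (ZMod.isUnit_iff_coprime 2 (p ^ a)).mpr
      (Nat.Coprime.pow_right _ ((Nat.coprime_primes Nat.prime_two hp).mpr (Ne.symm hp2)))
  simpa using this

lemma count_sq_pp (p a k : ℕ) [Fact p.Prime] (hp2 : p ≠ 2) :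
    #{w : ZMod (p ^ a) | ((p ^ k : ℕ) : ZMod (p ^ a)) * (w ^ 2 - 1) = 0} ≤ 2 * p ^ k := by
  have hp : p.Prime := Fact.out
  have hpos : 0 < p ^ k := pow_pos hp.pos k
  have h1 := card_smul_zero (p ^ a) (p ^ k) hpos 1
  have h2 := card_smul_zero (p ^ a) (p ^ k) hpos (-1)
  refine le_trans (card_le_card (t := (univ.filter fun w : ZMod (p ^ a) =>
    ((p ^ k : ℕ) : ZMod (p ^ a)) * (w - 1) = 0) ∪ (univ.filter fun w : ZMod (p ^ a) =>
    ((p ^ k : ℕ) : ZMod (p ^ a)) * (w - (-1)) = 0)) ?_) ((card_union_le _ _).trans (by omega))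
  intro w hw
  simp only [mem_filter, mem_univ, true_and, mem_union] at hw ⊢
  obtain ⟨j, rfl⟩ := ZMod.intCast_surjective w
  by_cases hj : (p : ℤ) ∣ j - 1
  · left
    have hj2 : ¬ (p : ℤ) ∣ j + 1 := by
      intro h
      have h3 : (p : ℤ) ∣ (2 : ℕ) := by
        have := dvd_sub h hj
        rwa [show j + 1 - (j - 1) = ((2 : ℕ) : ℤ) by push_cast; ring] at this
      have := (Nat.prime_dvd_prime_iff_eq hp Nat.prime_two).mp (Int.natCast_dvd_natCast.mp h3)
      exact hp2 this
    have hu := isUnit_cast_pow p a _ hj2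
    rw [← hu.mul_left_eq_zero]
    push_cast at hw ⊢
    linear_combination hw
  · right
    have hu := isUnit_cast_pow p a _ hj
    rw [← hu.mul_left_eq_zero]
    push_cast at hw ⊢
    linear_combination hw

/-- Sums over units factor through a quotient. -/
lemma units_fiber (n d : ℕ) [NeZero n] [NeZero d] (h : d ∣ n) :
    ∃ K : ℕ, 1 ≤ K ∧ K * Nat.totient d = Nat.totient n ∧
      ∀ f : (ZMod d)ˣ → ℂ, ∑ u : (ZMod n)ˣ, f (ZMod.unitsMap h u) = K * ∑ u : (ZMod d)ˣ, f u := by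
  classical
  have hs := ZMod.unitsMap_surjective h
  have key : ∀ y : (ZMod d)ˣ, #{u : (ZMod n)ˣ | ZMod.unitsMap h u = y} =
      #{u : (ZMod n)ˣ | ZMod.unitsMap h u = 1} := fun y =>
    MonoidHom.card_fiber_eq_of_mem_range (ZMod.unitsMap h) (hs y) (hs 1)
  have main : ∀ f : (ZMod d)ˣ → ℂ, ∑ u : (ZMod n)ˣ, f (ZMod.unitsMap h u) =
      (#{u : (ZMod n)ˣ | ZMod.unitsMap h u = 1} : ℕ) * ∑ u : (ZMod d)ˣ, f u := by
    intro f
    rw [← sum_fiberwise univ (ZMod.unitsMap h), mul_sum]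
    refine sum_congr rfl fun y _ => ?_
    rw [sum_congr rfl (g := fun _ => f y), sum_const, nsmul_eq_mul, key]
    intro u hu
    rw [(mem_filter.mp hu).2]
  refine ⟨_, ?_, ?_, main⟩
  · exact card_pos.mpr ⟨1, by simp⟩
  · have := main fun _ => 1
    simp only [sum_const, card_univ, ZMod.card_units_eq_totient, nsmul_eq_mul, mul_one] at this
    exact_mod_cast this.symm

lemma chiJ_inv_P (p a s : ℕ) [Fact p.Prime] (hs : 1 ≤ s) (u w : (ZMod (p ^ a))ˣ)
    (h : ∃ t, (w : ZMod (p ^ a)) = 1 + ((p ^ s : ℕ) : ZMod (p ^ a)) * t) :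
    chiJ (p ^ a) (u * w) = chiJ (p ^ a) u := by
  have hp : p.Prime := Fact.out
  obtain ⟨t, ht⟩ := h
  obtain ⟨j, rfl⟩ := ZMod.intCast_surjective t
  rw [chiJ_mul, chiJ_pow_one p a w (1 + (p ^ s : ℕ) * j) (by rw [ht]; push_cast; ring), mul_one]
  rw [add_sub_cancel_left]
  push_cast
  exact Dvd.dvd.mul_right (dvd_pow_self _ (by omega)) _

lemma nilp_P (p a s : ℕ) (hs : 1 ≤ s) : IsNilpotent (((p ^ s : ℕ) : ZMod (p ^ a))) := by
  refine ⟨a, ?_⟩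
  rw [← Nat.cast_pow, ZMod.natCast_eq_zero_iff, ← pow_mul]
  exact pow_dvd_pow _ (Nat.le_mul_of_pos_left _ hs)

lemma cast_zero_pp (p a : ℕ) (j : ℤ) : ((j : ZMod (p ^ a)) = 0) ↔ ((p : ℤ) ^ a ∣ j) := by
  rw [ZMod.intCast_zmod_eq_zero_iff_dvd]; push_cast; rfl

/-- Stationary phase for the Jacobi character. -/
lemma KS_sp_pp (p a s : ℕ) [Fact p.Prime] (hs : 1 ≤ s) (A B : ℤ) (hA : (p : ℤ) ^ a ∣ A * p ^ (2 * s)) :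
    ‖KS (p ^ a) (chiJ (p ^ a)) A B‖ ≤
      #{u : (ZMod (p ^ a))ˣ | ((p ^ s : ℕ) : ZMod (p ^ a)) *
        ((B : ZMod (p ^ a)) * (u : ZMod (p ^ a)) - A * ((u⁻¹ : (ZMod (p ^ a))ˣ) : ZMod (p ^ a))) = 0} := by
  apply KS_sp _ _ (fun u => (chiJ_norm _ u).le) _ _ _ (nilp_P p a s hs)
  · have := (cast_zero_pp p a _).mpr hA
    push_cast at this ⊢
    rw [← this]; ring
  · exact chiJ_inv_P p a s hs

lemma unit_int_not_dvd (p a : ℕ) [Fact p.Prime] (ha : 1 ≤ a) (u : (ZMod (p ^ a))ˣ) :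
    ∃ j : ℤ, (j : ZMod (p ^ a)) = u ∧ ¬ (p : ℤ) ∣ j := by
  have hp : p.Prime := Fact.out
  obtain ⟨j, hj, hg⟩ := exists_int_unit _ u
  refine ⟨j, hj, fun h => ?_⟩
  have : (p : ℤ) ∣ (Int.gcd j ((p ^ a : ℕ) : ℤ) : ℤ) := by
    apply Int.dvd_coe_gcd h
    push_cast
    exact dvd_pow_self _ (by omega)
  rw [hg] at this
  exact hp.one_lt.ne' (by exact_mod_cast Int.eq_one_of_dvd_one (by positivity) this)

/-- Vanishing. -/
lemma KS_vanish (p a i : ℕ) [Fact p.Prime] (ha : i + 2 ≤ a) (A B : ℤ)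
    (h : ((p : ℤ) ∣ A ∧ ¬ (p : ℤ) ∣ B) ∨ (¬ (p : ℤ) ∣ A ∧ (p : ℤ) ∣ B)) :
    KS (p ^ a) (chiJ (p ^ a)) ((p ^ i * A : ℤ) : ZMod (p ^ a)) ((p ^ i * B : ℤ) : ZMod (p ^ a)) = 0 := by
  have hp : p.Prime := Fact.out
  have hpi := Nat.prime_iff_prime_int.mp hp
  have hp0 : (p : ℤ) ≠ 0 := by exact_mod_cast hp.ne_zero
  rw [← norm_le_zero_iff]
  refine (KS_sp_pp p a (a - 1 - i) (by omega) _ _ ?_).trans ?_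
  · have : (p : ℤ) ^ i * A * p ^ (2 * (a - 1 - i)) = p ^ (i + 2 * (a - 1 - i)) * A := by
      rw [pow_add]; ring
    rw [this]
    exact Dvd.dvd.mul_right (pow_dvd_pow _ (by omega)) _
  · rw [filter_eq_empty_iff.mpr]
    · simp
    intro u _ hu
    obtain ⟨j, hj, hj'⟩ := unit_int_not_dvd p a (by omega) u
    obtain ⟨k, hk, hk'⟩ := unit_int_not_dvd p a (by omega) u⁻¹
    rw [← hj, ← hk] at hu
    have h1 : ((p ^ (a - 1 - i) * (p ^ i * B * j - p ^ i * A * k) : ℤ) : ZMod (p ^ a)) = 0 := by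
      rw [← hu]; push_cast; ring
    rw [cast_zero_pp, show (p : ℤ) ^ (a - 1 - i) * (p ^ i * B * j - p ^ i * A * k) =
      p ^ (a - 1 - i) * p ^ i * (B * j - A * k) by ring, ← pow_add,
      show a - 1 - i + i = a - 1 by omega] at h1
    obtain ⟨b, rfl⟩ : ∃ b, a = b + 1 := ⟨a - 1, by omega⟩
    rw [pow_succ, Nat.add_sub_cancel] at h1
    have h2 := (mul_dvd_mul_iff_left (pow_ne_zero b hp0)).mp h1
    rcases h with ⟨hA, hB⟩ | ⟨hA, hB⟩
    · have h3 : (p : ℤ) ∣ B * j := (dvd_sub_left (hA.mul_right k)).mp h2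
      rcases hpi.dvd_or_dvd h3 with h | h <;> tauto
    · have h3 : (p : ℤ) ∣ A * k := (dvd_sub_right (hB.mul_right j)).mp h2
      rcases hpi.dvd_or_dvd h3 with h | h <;> tauto

/-- Both exactly divisible by `p`. -/
lemma KS_exact (p a : ℕ) [Fact p.Prime] (hp2 : p ≠ 2) (ha : 3 ≤ a) (A B : ℤ) (hB : ¬ (p : ℤ) ∣ B) :
    ‖KS (p ^ a) (chiJ (p ^ a)) ((p * A : ℤ) : ZMod (p ^ a)) ((p * B : ℤ) : ZMod (p ^ a))‖
      ≤ 2 * (p : ℝ) ^ (a / 2 + 1) := by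
  refine (KS_sp_pp p a (a / 2) (by omega) _ _ ?_).trans ?_
  · have : (p : ℤ) * A * p ^ (2 * (a / 2)) = p ^ (1 + 2 * (a / 2)) * A := by
      rw [pow_add]; ring
    rw [this]
    exact Dvd.dvd.mul_right (pow_dvd_pow _ (by omega)) _
  · have h1 := (count_ratio (p ^ a) ((p * A : ℤ) : ZMod (p ^ a)) ((p * B : ℤ) : ZMod (p ^ a))
      ((p ^ (a / 2) : ℕ) : ZMod (p ^ a)))
    have h2 := count_sq_pp p a (a / 2 + 1) hp2
    have h3 : #{w : ZMod (p ^ a) | ((p ^ (a / 2) : ℕ) : ZMod (p ^ a)) * ((p * B : ℤ) : ZMod (p ^ a)) *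
        (w ^ 2 - 1) = 0} ≤
        #{w : ZMod (p ^ a) | ((p ^ (a / 2 + 1) : ℕ) : ZMod (p ^ a)) * (w ^ 2 - 1) = 0} := by
      apply card_le_card
      intro w hw
      simp only [mem_filter, mem_univ, true_and] at hw ⊢
      have hu := isUnit_cast_pow p a _ hB
      rw [← hu.mul_left_eq_zero, ← hw]
      push_cast; ring
    exact_mod_cast h1.trans (h3.trans h2)

lemma KS_unit (p a : ℕ) [Fact p.Prime] (hp2 : p ≠ 2) (A B : ℤ) (hA : ¬ (p : ℤ) ∣ A)
    (hB : ¬ (p : ℤ) ∣ B ∨ a = 0) :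
    ‖KS (p ^ (a + 1)) (chiJ (p ^ (a + 1))) A B‖ ≤ 2 * Real.sqrt ((p ^ (a + 1) : ℕ) : ℝ) := by
  obtain ⟨A', hA'⟩ := isUnit_cast_pow p (a + 1) A hA
  rw [← hA']
  refine (salie p a hp2 A' B).trans ?_
  rw [mul_comm]
  refine mul_le_mul_of_nonneg_right ?_ (Real.sqrt_nonneg _)
  suffices #{y : ZMod (p ^ (a + 1)) | (A' : ZMod (p ^ (a + 1))) * y ^ 2 = B} ≤ 2 by exact_mod_cast this
  by_cases hB' : (p : ℤ) ∣ B
  · have ha : a = 0 := by tauto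
    subst ha
    have hB0 : (B : ZMod (p ^ (0 + 1))) = 0 := (cast_zero_pp _ _ _).mpr (by simpa using hB')
    rw [hB0]
    refine le_trans (card_le_card (t := {0}) ?_) (by simp)
    intro y hy
    simp only [mem_filter, mem_univ, true_and, mem_singleton] at hy ⊢
    rw [A'.isUnit.mul_right_eq_zero] at hy
    have : ¬ IsUnit y := by
      intro h
      have h2 := h.pow 2
      rw [hy] at h2
      have hp : p.Prime := Fact.out
      have : Fact (1 < p ^ (0 + 1)) := ⟨by simpa using hp.one_lt⟩
      exact not_isUnit_zero h2
    simpa using nonunit_mul p 0 y this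
  · have hBu := isUnit_cast_pow p (a + 1) B hB'
    rcases Finset.eq_empty_or_nonempty
      (univ.filter fun y : ZMod (p ^ (a + 1)) => (A' : ZMod (p ^ (a + 1))) * y ^ 2 = B) with h | ⟨y₀, hy₀⟩
    · rw [h]; simp
    have h0 := (mem_filter.mp hy₀).2
    have hyu : IsUnit y₀ := by
      have : IsUnit (y₀ ^ 2) := by
        rw [← h0] at hBu
        exact isUnit_of_mul_isUnit_right hBu
      exact (isUnit_pow_iff (by norm_num)).mp this
    obtain ⟨z, rfl⟩ := hyu
    refine le_trans ?_ (count_sq_pp p (a + 1) 0 hp2)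
    refine card_le_card_of_injOn (fun u => (u : ZMod (p ^ (a + 1))) * ((z⁻¹ : (ZMod (p ^ (a + 1)))ˣ) :
      ZMod (p ^ (a + 1)))) ?_ ?_
    · intro y hy
      simp only [coe_filter, mem_univ, true_and, Set.mem_ofPred_eq] at hy ⊢
      have e2 : (z : ZMod (p ^ (a + 1))) * ((z⁻¹ : (ZMod (p ^ (a + 1)))ˣ) : ZMod (p ^ (a + 1))) = 1 := by simp
      have e1 : (A' : ZMod (p ^ (a + 1))) * y ^ 2 = A' * z ^ 2 := by rw [hy, h0]
      have e3 := A'.isUnit.mul_left_cancel e1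
      rw [mul_pow, e3, ← mul_pow, e2]; simp
    · intro x _ y _ hxy
      exact (z⁻¹).isUnit.mul_left_injective hxy

lemma unitsMap_int (n d : ℕ) (h : d ∣ n) (u : (ZMod n)ˣ) (j : ℤ) (hj : (j : ZMod n) = u) :
    (j : ZMod d) = ((ZMod.unitsMap h u : (ZMod d)ˣ) : ZMod d) := by
  rw [ZMod.unitsMap_val, ← hj, ZMod.cast_intCast h]

lemma stdAddChar_mul_eq (n q k : ℕ) [NeZero n] [NeZero q] (h : n = k * q) (j : ℤ) :
    ZMod.stdAddChar (((k : ℤ) * j : ℤ) : ZMod n) = ZMod.stdAddChar (j : ZMod q) := by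
  rw [ZMod.stdAddChar_coe, ZMod.stdAddChar_coe]
  congr 1
  have hn : n ≠ 0 := NeZero.ne n
  have hk : (k : ℂ) ≠ 0 := by
    rintro hk
    have : k = 0 := by exact_mod_cast hk
    exact hn (by rw [h, this, zero_mul])
  have hq : (q : ℂ) ≠ 0 := by exact_mod_cast NeZero.ne q
  rw [h]
  push_cast; field_simp

/-- Reduction when both entries are divisible by `p ^ 2`. -/
lemma KS_reduce (p a : ℕ) [Fact p.Prime] (ha : 1 ≤ a) (A B : ℤ) :
    ‖KS (p ^ (a + 2)) (chiJ (p ^ (a + 2))) ((p ^ 2 * A : ℤ) : ZMod (p ^ (a + 2)))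
      ((p ^ 2 * B : ℤ) : ZMod (p ^ (a + 2)))‖ ≤ p ^ 2 * ‖KS (p ^ a) (chiJ (p ^ a)) A B‖ := by
  have hp : p.Prime := Fact.out
  have hd : p ^ a ∣ p ^ (a + 2) := pow_dvd_pow _ (by omega)
  obtain ⟨K, -, hK, hsum⟩ := units_fiber (p ^ (a + 2)) (p ^ a) hd
  have hK2 : K = p ^ 2 := by
    rw [Nat.totient_prime_pow hp (by omega), Nat.totient_prime_pow hp (by omega)] at hK
    have hpos : 0 < p ^ (a - 1) * (p - 1) := Nat.mul_pos (pow_pos hp.pos _) (by have := hp.two_le; omega)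
    apply Nat.eq_of_mul_eq_mul_right hpos
    rw [hK, show a + 2 - 1 = (a - 1) + 2 by omega, pow_add]; ring
  have := hsum fun u => chiJ (p ^ a) u * ZMod.stdAddChar ((A : ZMod (p ^ a)) *
    ((u⁻¹ : (ZMod (p ^ a))ˣ) : ZMod (p ^ a)) + (B : ZMod (p ^ a)) * (u : ZMod (p ^ a)))
  have h2 : KS (p ^ (a + 2)) (chiJ (p ^ (a + 2))) ((p ^ 2 * A : ℤ) : ZMod (p ^ (a + 2)))
      ((p ^ 2 * B : ℤ) : ZMod (p ^ (a + 2))) = K * KS (p ^ a) (chiJ (p ^ a)) A B := by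
    unfold KS
    rw [← this]
    refine sum_congr rfl fun u _ => ?_
    obtain ⟨j, hj, hjg⟩ := unit_int_not_dvd p (a + 2) (by omega) u
    obtain ⟨k, hk, hkg⟩ := unit_int_not_dvd p (a + 2) (by omega) u⁻¹
    rw [← map_inv, ← hj, ← hk, ← unitsMap_int _ _ hd u j hj, ← unitsMap_int _ _ hd u⁻¹ k hk,
      chiJ_int _ u j hj, chiJ_int _ _ j (unitsMap_int _ _ hd u j hj)]
    congr 1
    · rw [jacobiSym.pow_right, jacobiSym.pow_right, pow_add]
      have : jacobiSym j p ^ 2 = 1 := by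
        apply jacobiSym.sq_one
        rw [← Int.isCoprime_iff_gcd_eq_one]
        exact ((Nat.prime_iff_prime_int.mp hp).coprime_iff_not_dvd.mpr hjg).symm
      rw [this, mul_one]
    · have this := stdAddChar_mul_eq (p ^ (a + 2)) (p ^ a) (p ^ 2) (by ring) (A * k + B * j)
      push_cast at this ⊢
      rw [← this]
      congr 1; ring
  rw [h2, hK2, norm_mul]
  simp

lemma KS_ramanujan (p : ℕ) [Fact p.Prime] (B : ℤ) (hB : ¬ (p : ℤ) ∣ B) :
    ‖KS (p ^ 2) (chiJ (p ^ 2)) 0 ((p * B : ℤ) : ZMod (p ^ 2))‖ ≤ p := by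
  have hp : p.Prime := Fact.out
  have hp0 : (p : ℤ) ≠ 0 := by exact_mod_cast hp.ne_zero
  have hx : ((p * B : ℤ) : ZMod (p ^ 2)) ≠ 0 := by
    rw [Ne, cast_zero_pp, pow_two, mul_dvd_mul_iff_left hp0]
    exact hB
  set x := ((p * B : ℤ) : ZMod (p ^ 2)) with hxdef
  have h1 : KS (p ^ 2) (chiJ (p ^ 2)) 0 x =
      ∑ u : (ZMod (p ^ 2))ˣ, (ZMod.stdAddChar ((u : ZMod (p ^ 2)) * x) : ℂ) := by
    unfold KS
    refine sum_congr rfl fun u _ => ?_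
    obtain ⟨j, hj, hg⟩ := unit_int_not_dvd p 2 (by omega) u
    rw [chiJ_int _ u j hj, jacobiSym.pow_right]
    have : jacobiSym j p ^ 2 = 1 := by
      apply jacobiSym.sq_one
      rw [← Int.isCoprime_iff_gcd_eq_one]
      exact ((Nat.prime_iff_prime_int.mp hp).coprime_iff_not_dvd.mpr hg).symm
    rw [this, zero_mul, zero_add, mul_comm x]; simp
  have h2 : ∑ y : ZMod (p ^ 2), (ZMod.stdAddChar (y * x) : ℂ) = 0 := by
    have := AddChar.sum_mulShift x (ZMod.isPrimitive_stdAddChar (p ^ 2))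
    rw [this, if_neg hx]; simp
  set U : Finset (ZMod (p ^ 2)) := univ.map ⟨fun u : (ZMod (p ^ 2))ˣ => (u : ZMod (p ^ 2)), Units.val_injective⟩ with hU
  have h3 : KS (p ^ 2) (chiJ (p ^ 2)) 0 x = ∑ y ∈ U, (ZMod.stdAddChar (y * x) : ℂ) := by
    rw [h1, hU, sum_map]; rfl
  rw [← sum_add_sum_compl U, ← h3] at h2
  rw [eq_neg_of_add_eq_zero_left h2, norm_neg]
  refine (norm_sum_le _ _).trans ?_
  simp only [norm_stdAddChar, sum_const, nsmul_eq_mul, mul_one]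
  rw [card_compl, ZMod.card, hU, card_map, card_univ, ZMod.card_units_eq_totient,
    Nat.totient_prime_pow hp (by norm_num)]
  have : p ^ 2 - p ^ (2 - 1) * (p - 1) = p := by
    obtain ⟨k, rfl⟩ : ∃ k, p = k + 1 := ⟨p - 1, by have := hp.one_lt; omega⟩
    simp only [Nat.add_sub_cancel]
    apply Nat.sub_eq_of_eq_add; ring
  rw [this]

/-- The bound modulo odd prime powers. -/
lemma KS_pp (p : ℕ) [Fact p.Prime] (hp2 : p ≠ 2) : ∀ (a : ℕ) (v M B : ℤ), 1 ≤ a → ¬ (p : ℤ) ^ 2 ∣ M →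
    ‖KS (p ^ a) (chiJ (p ^ a)) ((v ^ 2 * M : ℤ) : ZMod (p ^ a)) (B : ZMod (p ^ a))‖ ≤
      2 * Real.sqrt ((p ^ a * Int.gcd (M * B) ((p ^ a : ℕ) : ℤ) : ℕ) : ℝ) := by
  have hp : p.Prime := Fact.out
  have hpi := Nat.prime_iff_prime_int.mp hp
  have hp1 : (1 : ℝ) ≤ p := by exact_mod_cast hp.one_lt.le
  intro a
  induction a using Nat.strong_induction_on with
  | _ a ih =>
  intro v M B ha hM
  have hgen : ∀ i ≤ a, (p : ℤ) ^ i ∣ M * B →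
      Real.sqrt ((p ^ (a + i) : ℕ) : ℝ) ≤
        Real.sqrt ((p ^ a * Int.gcd (M * B) ((p ^ a : ℕ) : ℤ) : ℕ) : ℝ) := by
    intro i hi hd
    apply Real.sqrt_le_sqrt
    rw [pow_add]
    have h1 : p ^ i ∣ Int.gcd (M * B) ((p ^ a : ℕ) : ℤ) := by
      apply Int.dvd_gcd
      · push_cast; exact hd
      · exact_mod_cast pow_dvd_pow p hi
    have h2 : 0 < Int.gcd (M * B) ((p ^ a : ℕ) : ℤ) :=
      Int.gcd_pos_of_ne_zero_right _ (by exact_mod_cast (pow_pos hp.pos a).ne')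
    exact_mod_cast Nat.mul_le_mul_left _ (Nat.le_of_dvd h2 h1)
  have h0 := hgen 0 (by omega) (by simp)
  have htriv : (p : ℤ) ^ a ∣ M * B →
    ‖KS (p ^ a) (chiJ (p ^ a)) ((v ^ 2 * M : ℤ) : ZMod (p ^ a)) (B : ZMod (p ^ a))‖ ≤
      2 * Real.sqrt ((p ^ a * Int.gcd (M * B) ((p ^ a : ℕ) : ℤ) : ℕ) : ℝ) := by
    intro hd
    have h1 := hgen a le_rfl hd
    refine (KS_trivial _ _ (fun u => (chiJ_norm _ u).le) _ _).trans ?_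
    have h2 : Real.sqrt ((p ^ (a + a) : ℕ) : ℝ) = (p ^ a : ℕ) := by
      rw [pow_add]; push_cast
      exact Real.sqrt_mul_self (by positivity)
    rw [h2] at h1
    have : (0 : ℝ) ≤ (p ^ a : ℕ) := by positivity
    linarith
  have hzero : KS (p ^ a) (chiJ (p ^ a)) ((v ^ 2 * M : ℤ) : ZMod (p ^ a)) (B : ZMod (p ^ a)) = 0 →
    ‖KS (p ^ a) (chiJ (p ^ a)) ((v ^ 2 * M : ℤ) : ZMod (p ^ a)) (B : ZMod (p ^ a))‖ ≤
      2 * Real.sqrt ((p ^ a * Int.gcd (M * B) ((p ^ a : ℕ) : ℤ) : ℕ) : ℝ) := by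
    intro h
    rw [h, norm_zero]; positivity
  by_cases hB : (p : ℤ) ∣ B
  · by_cases hA : (p : ℤ) ∣ v ^ 2 * M
    · by_cases ha1 : a = 1
      · subst ha1
        exact htriv (by rw [pow_one]; exact hB.mul_left M)
      obtain ⟨B1, rfl⟩ := hB
      by_cases hv : (p : ℤ) ∣ v
      · obtain ⟨v1, rfl⟩ := hv
        by_cases hB1 : (p : ℤ) ∣ B1
        · obtain ⟨B2, rfl⟩ := hB1
          by_cases ha2 : a = 2
          · subst ha2
            exact htriv ⟨M * B2, by ring⟩
          obtain ⟨b, rfl⟩ : ∃ b, a = b + 2 := ⟨a - 2, by omega⟩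
          have h1 := ih b (by omega) v1 M B2 (by omega) hM
          have h2 := KS_reduce p b (by omega) (v1 ^ 2 * M) B2
          rw [show ((p : ℤ) * v1) ^ 2 * M = p ^ 2 * (v1 ^ 2 * M) by ring,
            show (p : ℤ) * (p * B2) = p ^ 2 * B2 by ring]
          refine h2.trans ((mul_le_mul_of_nonneg_left h1 (by positivity)).trans (le_of_eq ?_))
          have hg : Int.gcd (M * (p ^ 2 * B2)) ((p ^ (b + 2) : ℕ) : ℤ) =
              p ^ 2 * Int.gcd (M * B2) ((p ^ b : ℕ) : ℤ) := by
            rw [show M * ((p : ℤ) ^ 2 * B2) = p ^ 2 * (M * B2) by ring,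
              show ((p ^ (b + 2) : ℕ) : ℤ) = p ^ 2 * ((p ^ b : ℕ) : ℤ) by push_cast; ring, Int.gcd_mul_left]
            congr 1
          rw [hg, show p ^ (b + 2) * (p ^ 2 * Int.gcd (M * B2) ((p ^ b : ℕ) : ℤ)) =
            (p ^ 2) ^ 2 * (p ^ b * Int.gcd (M * B2) ((p ^ b : ℕ) : ℤ)) by ring]
          rw [Nat.cast_mul ((p ^ 2) ^ 2), Real.sqrt_mul (by positivity), Nat.cast_pow (p ^ 2),
            Real.sqrt_sq (by positivity)]
          push_cast; ring
        · by_cases ha2 : a = 2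
          · subst ha2
            have hA0 : (((p * v1) ^ 2 * M : ℤ) : ZMod (p ^ 2)) = 0 :=
              (cast_zero_pp _ _ _).mpr ⟨v1 ^ 2 * M, by ring⟩
            rw [hA0]
            refine (KS_ramanujan p B1 hB1).trans ?_
            have h2 : Real.sqrt ((p ^ (2 + 0) : ℕ) : ℝ) = p := by
              push_cast
              exact Real.sqrt_sq (by positivity)
            rw [h2] at h0
            linarith
          · apply hzero
            have := KS_vanish p a 1 (by omega) (p * (v1 ^ 2 * M)) B1 (Or.inl ⟨dvd_mul_right _ _, hB1⟩)
            rw [← this]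
            congr 2
            · ring
            · ring
      · have hpM : (p : ℤ) ∣ M := by
          rcases hpi.dvd_or_dvd hA with h | h
          · exact absurd (hpi.dvd_of_dvd_pow h) hv
          · exact h
        obtain ⟨M1, rfl⟩ := hpM
        have hM1 : ¬ (p : ℤ) ∣ M1 := fun h => hM (by rw [pow_two]; exact mul_dvd_mul_left _ h)
        have hA1 : ¬ (p : ℤ) ∣ v ^ 2 * M1 := by
          intro h
          rcases hpi.dvd_or_dvd h with h | h
          · exact absurd (hpi.dvd_of_dvd_pow h) hv
          · exact hM1 h
        by_cases ha2 : a = 2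
        · subst ha2
          exact htriv ⟨M1 * B1, by ring⟩
        by_cases hB1 : (p : ℤ) ∣ B1
        · apply hzero
          have := KS_vanish p a 1 (by omega) (v ^ 2 * M1) B1 (Or.inr ⟨hA1, hB1⟩)
          rw [← this]
          congr 2
          · ring
          · ring
        · rw [show v ^ 2 * ((p : ℤ) * M1) = p * (v ^ 2 * M1) by ring]
          refine (KS_exact p a hp2 (by omega) _ B1 hB1).trans ?_
          have h2 := hgen 2 (by omega) ⟨M1 * B1, by ring⟩
          refine mul_le_mul_of_nonneg_left (le_trans ?_ h2) (by norm_num)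
          apply Real.le_sqrt_of_sq_le
          rw [← pow_mul]
          push_cast
          exact pow_le_pow_right₀ hp1 (by omega)
    · by_cases ha1 : a = 1
      · subst ha1
        have := KS_unit p 0 hp2 (v ^ 2 * M) B hA (Or.inr rfl)
        refine this.trans ?_
        exact mul_le_mul_of_nonneg_left h0 (by norm_num)
      · apply hzero
        have := KS_vanish p a 0 (by omega) (v ^ 2 * M) B (Or.inr ⟨hA, hB⟩)
        simpa using this
  · by_cases hA : (p : ℤ) ∣ v ^ 2 * M
    · by_cases ha1 : a = 1
      · subst ha1
        have := KS_unit p 0 hp2 B (v ^ 2 * M) hB (Or.inr rfl)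
        rw [KS_symm _ _ (chiJ_inv _)]
        refine this.trans ?_
        exact mul_le_mul_of_nonneg_left h0 (by norm_num)
      · apply hzero
        have := KS_vanish p a 0 (by omega) (v ^ 2 * M) B (Or.inl ⟨hA, hB⟩)
        simpa using this
    · obtain ⟨b, rfl⟩ : ∃ b, a = b + 1 := ⟨a - 1, by omega⟩
      refine (KS_unit p b hp2 (v ^ 2 * M) B hA (Or.inl hB)).trans ?_
      exact mul_le_mul_of_nonneg_left h0 (by norm_num)

/-! ### Part 5: bounds modulo odd integers -/

lemma gcd_unit_mul (r : ℤ) (m n : ℕ) (s X : ℤ) (h : r * n + s * m = 1) :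
    Int.gcd (r * X) (m : ℤ) = Int.gcd X (m : ℤ) := by
  apply Int.gcd_mul_right_left_of_gcd_eq_one
  rw [← Int.isCoprime_iff_gcd_eq_one]
  exact ⟨n, s, by linear_combination h⟩

lemma sq_not_dvd (r : ℤ) (m n : ℕ) (s M : ℤ) (h : r * n + s * m = 1) (p : ℕ) (hpm : p ∣ m)
    (hM : ¬ (p : ℤ) ^ 2 ∣ M) : ¬ (p : ℤ) ^ 2 ∣ r * M := by
  intro hd
  apply hM
  obtain ⟨k, rfl⟩ := hpm
  have hc : IsCoprime ((p : ℤ) ^ 2) r := by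
    apply IsCoprime.pow_left
    exact ⟨s * k, n, by push_cast at h; linear_combination h⟩
  exact hc.dvd_of_dvd_mul_left hd

lemma chiJ_crt (m n : ℕ) [NeZero m] [NeZero n] (u : (ZMod (m * n))ˣ) :
    chiJ (m * n) u = chiJ m (ZMod.unitsMap (dvd_mul_right m n) u) *
      chiJ n (ZMod.unitsMap (dvd_mul_left n m) u) := by
  obtain ⟨j, hj, -⟩ := exists_int_unit _ u
  rw [chiJ_int _ u j hj, chiJ_int _ _ j (unitsMap_int _ _ (dvd_mul_right m n) u j hj),
    chiJ_int _ _ j (unitsMap_int _ _ (dvd_mul_left n m) u j hj), jacobiSym.mul_right]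
  push_cast; rfl

lemma KS_odd (q : ℕ) : ∀ (_ : NeZero q), Odd q → ∀ v M B : ℤ,
    (∀ p : ℕ, p.Prime → p ∣ q → ¬ (p : ℤ) ^ 2 ∣ M) →
    ‖KS q (chiJ q) ((v ^ 2 * M : ℤ) : ZMod q) (B : ZMod q)‖ ≤
      (q.divisors.card : ℝ) * Real.sqrt ((q * Int.gcd (M * B) (q : ℤ) : ℕ) : ℝ) := by
  induction q using Nat.recOnPosPrimePosCoprime with
  | zero => intro h; exact absurd rfl h.out
  | one =>
    intro _ _ v M B _
    refine (KS_trivial _ _ (fun u => (chiJ_norm _ u).le) _ _).trans ?_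
    simp
  | prime_pow p a hp ha =>
    intro _ hodd v M B hM
    have : Fact p.Prime := ⟨hp⟩
    have hp2 : p ≠ 2 := by
      rintro rfl
      exact absurd hodd (Nat.not_odd_iff_even.mpr (Nat.even_pow.mpr ⟨even_two, by omega⟩))
    refine (KS_pp p hp2 a v M B ha (hM p hp (dvd_pow_self _ (by omega)))).trans ?_
    refine mul_le_mul_of_nonneg_right ?_ (Real.sqrt_nonneg _)
    rw [Nat.divisors_prime_pow hp, card_map, card_range]
    push_cast
    have : (1 : ℝ) ≤ a := by exact_mod_cast ha
    linarith
  | coprime m n hm hn hmn ihm ihn =>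
    intro _ hodd v M B hM
    have : NeZero m := ⟨by omega⟩
    have : NeZero n := ⟨by omega⟩
    rw [Nat.odd_mul] at hodd
    obtain ⟨s, r, h⟩ := (Nat.isCoprime_iff_coprime.mpr hmn)
    have hrs : r * n + s * m = 1 := by linear_combination h
    have hsr : s * m + r * n = 1 := by linear_combination h
    rw [KS_crt m n hmn r s hrs _ _ _ (chiJ_crt m n), norm_mul]
    have h1 := ihm inferInstance hodd.1 v (r * M) (r * B) (fun p hp hpm =>
      sq_not_dvd r m n s M hrs p hpm (hM p hp (hpm.mul_right n)))
    have h2 := ihn inferInstance hodd.2 v (s * M) (s * B) (fun p hp hpm =>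
      sq_not_dvd s n m r M hsr p hpm (hM p hp (hpm.mul_left m)))
    rw [show r * M * (r * B) = r * (r * (M * B)) by ring, gcd_unit_mul r m n s _ hrs,
      gcd_unit_mul r m n s _ hrs, show v ^ 2 * (r * M) = r * (v ^ 2 * M) by ring] at h1
    rw [show s * M * (s * B) = s * (s * (M * B)) by ring, gcd_unit_mul s n m r _ hsr,
      gcd_unit_mul s n m r _ hsr, show v ^ 2 * (s * M) = s * (v ^ 2 * M) by ring] at h2
    refine (mul_le_mul h1 h2 (norm_nonneg _) (by positivity)).trans (le_of_eq ?_)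
    rw [Nat.Coprime.card_divisors_mul hmn]
    have hg : Int.gcd (M * B) ((m * n : ℕ) : ℤ) = Int.gcd (M * B) (m : ℤ) * Int.gcd (M * B) (n : ℤ) := by
      simp only [Int.gcd, Int.natAbs_natCast]
      exact Nat.Coprime.gcd_mul _ hmn
    rw [hg, show m * n * (Int.gcd (M * B) (m : ℤ) * Int.gcd (M * B) (n : ℤ)) =
      (m * Int.gcd (M * B) (m : ℤ)) * (n * Int.gcd (M * B) (n : ℤ)) by ring, Nat.cast_mul (m * _),
      Real.sqrt_mul (by positivity)]
    push_cast; ring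

/-! ### Part 6: the part at 2 and 3 -/

lemma sign_three (k : ℕ) (w : ℤ) (h : (3 : ℤ) ^ k ∣ w ^ 2 - 1) : (3 : ℤ) ^ k ∣ w - 1 ∨ (3 : ℤ) ^ k ∣ w + 1 := by
  have e : w ^ 2 - 1 = (w - 1) * (w + 1) := by ring
  rw [e] at h
  by_cases h1 : (3 : ℤ) ∣ w - 1
  · left
    have : IsCoprime ((3 : ℤ) ^ k) (w + 1) := by
      apply IsCoprime.pow_left
      apply (Int.prime_three.coprime_iff_not_dvd).mpr
      omega
    exact this.dvd_of_dvd_mul_right h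
  · right
    have : IsCoprime ((3 : ℤ) ^ k) (w - 1) := by
      apply IsCoprime.pow_left
      exact (Int.prime_three.coprime_iff_not_dvd).mpr h1
    exact this.dvd_of_dvd_mul_left h

lemma sign_two (k : ℕ) (w : ℤ) (h : (2 : ℤ) ^ k ∣ w ^ 2 - 1) :
    (2 : ℤ) ^ k ∣ 2 * (w - 1) ∨ (2 : ℤ) ^ k ∣ 2 * (w + 1) := by
  rcases Nat.eq_zero_or_pos k with rfl | hk
  · left; simp
  have e : w ^ 2 - 1 = (w - 1) * (w + 1) := by ring
  have hw : Odd w := by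
    have h2 : (2 : ℤ) ∣ w ^ 2 - 1 := (dvd_pow_self _ (by omega)).trans h
    by_contra hw
    rw [Int.not_odd_iff_even] at hw
    obtain ⟨x, rfl⟩ := hw
    have : (x + x) ^ 2 - 1 = 2 * (2 * x ^ 2) - 1 := by ring
    omega
  obtain ⟨x, rfl⟩ := hw
  rcases Int.even_or_odd x with ⟨y, rfl⟩ | ⟨y, rfl⟩
  · left
    have : IsCoprime ((2 : ℤ) ^ k) (2 * y + 1) := by
      apply IsCoprime.pow_left
      apply (Int.prime_two.coprime_iff_not_dvd).mpr
      omega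
    apply this.dvd_of_dvd_mul_right
    rwa [show 2 * (2 * (y + y) + 1 - 1) * (2 * y + 1) = (2 * (y + y) + 1) ^ 2 - 1 by ring]
  · right
    have : IsCoprime ((2 : ℤ) ^ k) (2 * y + 1) := by
      apply IsCoprime.pow_left
      apply (Int.prime_two.coprime_iff_not_dvd).mpr
      omega
    apply this.dvd_of_dvd_mul_right
    rwa [show 2 * (2 * (2 * y + 1) + 1 + 1) * (2 * y + 1) = (2 * (2 * y + 1) + 1) ^ 2 - 1 by ring]

lemma KS_six (i k j : ℕ) (q : ℕ) [NeZero q] (hq : q = 24 * ((2 ^ i * 3 ^ k) ^ 2 * j))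
    (χ : (ZMod q)ˣ → ℂ) (hχ : ∀ u, ‖χ u‖ ≤ 1)
    (hinv : ∀ u w : (ZMod q)ˣ, (∃ t, (w : ZMod q) = 1 + 24 * t) → χ (u * w) = χ u)
    (A B : ZMod q) (hB : IsUnit B) :
    ‖KS q χ A B‖ ≤ 192 * (2 ^ i * 3 ^ k * j : ℕ) := by
  classical
  set h : ℕ := 2 ^ i * 3 ^ k with hh
  have hh0 : 0 < h := by positivity
  have hj0 : 0 < j := by
    rcases Nat.eq_zero_or_pos j with rfl | h
    · exact absurd (by simpa using hq) (NeZero.ne q)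
    · exact h
  have hPsq : (((24 * h * j : ℕ) : ZMod q)) ^ 2 = 0 := by
    rw [← Nat.cast_pow, ZMod.natCast_eq_zero_iff]
    exact ⟨24 * j, by rw [hq]; ring⟩
  refine (KS_sp q χ hχ A B ((24 * h * j : ℕ) : ZMod q) ⟨2, hPsq⟩ (by rw [hPsq, mul_zero]) ?_).trans ?_
  · rintro u w ⟨t, ht⟩
    exact hinv u w ⟨h * j * t, by rw [ht]; push_cast; ring⟩
  refine (Nat.cast_le.mpr (count_ratio q A B ((24 * h * j : ℕ) : ZMod q))).trans ?_
  set T : ℤ → ℤ → Finset (ZMod q) := fun s t => univ.filter fun w : ZMod q =>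
    ∃ x : ℤ, (x : ZMod q) = w ∧ (3 : ℤ) ^ k ∣ x - s ∧ (2 : ℤ) ^ i ∣ 2 * (x - t) with hT
  have hTc : ∀ s t, #(T s t) ≤ 48 * h * j := by
    intro s t
    rcases (T s t).eq_empty_or_nonempty with h1 | ⟨w₀, hw₀⟩
    · rw [h1]; simp
    obtain ⟨x₀, hx₀, h30, h20⟩ := (mem_filter.mp hw₀).2
    refine le_trans (card_le_card ?_) (card_smul_zero q (48 * h * j) (by positivity) w₀)
    intro w hw
    obtain ⟨x, hx, h3, h2⟩ := (mem_filter.mp hw).2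
    simp only [mem_filter, mem_univ, true_and]
    have hd : (h : ℤ) ∣ 2 * (x - x₀) := by
      rw [hh]; push_cast
      apply IsCoprime.mul_dvd
      · apply IsCoprime.pow; norm_num
      · have := dvd_sub h2 h20
        convert this using 1; ring
      · have := dvd_sub h3 h30
        apply Dvd.dvd.mul_left
        convert this using 1; ring
    obtain ⟨y, hy⟩ := hd
    rw [← hx, ← hx₀]
    have : (((48 * h * j : ℕ) * (x - x₀) : ℤ) : ZMod q) = 0 := by
      rw [ZMod.intCast_zmod_eq_zero_iff_dvd]
      refine ⟨y, ?_⟩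
      rw [hq]
      push_cast
      linear_combination 24 * (h : ℤ) * j * hy
    rw [← this]; push_cast; ring
  have hsub : (univ.filter fun w : ZMod q => ((24 * h * j : ℕ) : ZMod q) * B * (w ^ 2 - 1) = 0) ⊆
      (T 1 1 ∪ T 1 (-1)) ∪ (T (-1) 1 ∪ T (-1) (-1)) := by
    intro w hw
    have hw := (mem_filter.mp hw).2
    obtain ⟨x, rfl⟩ := ZMod.intCast_surjective w
    have h1 : (((24 * h * j : ℕ) * (x ^ 2 - 1) : ℤ) : ZMod q) = 0 := by
      rw [← hB.mul_left_eq_zero, ← hw]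
      push_cast; ring
    rw [ZMod.intCast_zmod_eq_zero_iff_dvd] at h1
    have hd : (h : ℤ) ∣ x ^ 2 - 1 := by
      have h0 : ((24 * h * j : ℕ) : ℤ) ≠ 0 := by
        have : 0 < 24 * h * j := by positivity
        exact_mod_cast this.ne'
      rw [← mul_dvd_mul_iff_left h0]
      rw [hq] at h1
      rwa [show ((24 * h * j : ℕ) : ℤ) * h = ((24 * (h ^ 2 * j) : ℕ) : ℤ) by push_cast; ring]
    have hd2 : (2 : ℤ) ^ i ∣ x ^ 2 - 1 := by
      refine dvd_trans ?_ hd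
      rw [hh]; push_cast; exact dvd_mul_right _ _
    have hd3 : (3 : ℤ) ^ k ∣ x ^ 2 - 1 := by
      refine dvd_trans ?_ hd
      rw [hh]; push_cast; exact dvd_mul_left _ _
    simp only [mem_union, hT, mem_filter, mem_univ, true_and]
    rcases sign_three k x hd3 with a | a <;> rcases sign_two i x hd2 with b | b
    · left; left; exact ⟨x, rfl, a, b⟩
    · left; right; exact ⟨x, rfl, a, by simpa using b⟩
    · right; left; exact ⟨x, rfl, by simpa using a, b⟩
    · right; right; exact ⟨x, rfl, by simpa using a, by simpa using b⟩
  have hfin := card_le_card hsub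
  have e1 := card_union_le (T 1 1 ∪ T 1 (-1)) (T (-1) 1 ∪ T (-1) (-1))
  have e2 := card_union_le (T 1 1) (T 1 (-1))
  have e3 := card_union_le (T (-1) 1) (T (-1) (-1))
  have a1 := hTc 1 1
  have a2 := hTc 1 (-1)
  have a3 := hTc (-1) 1
  have a4 := hTc (-1) (-1)
  have : #(univ.filter fun w : ZMod q => ((24 * h * j : ℕ) : ZMod q) * B * (w ^ 2 - 1) = 0) ≤ 192 * (h * j) := by
    have : 192 * (h * j) = 48 * h * j + 48 * h * j + (48 * h * j + 48 * h * j) := by ring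
    omega
  exact_mod_cast this

/-- Every number is `2`-`3`-smooth part times the part coprime to `6`. -/
lemma split_six (c : ℕ) (hc : 1 ≤ c) : ∃ i k j c' : ℕ, c = (2 ^ i * 3 ^ k) ^ 2 * j * c' ∧
    (j = 1 ∨ j = 2 ∨ j = 3 ∨ j = 6) ∧ Nat.Coprime 6 c' := by
  obtain ⟨α, x, hx, rfl⟩ := Nat.exists_eq_pow_mul_and_not_dvd (n := c) (by omega) 2 (by norm_num)
  obtain ⟨β, y, hy, rfl⟩ := Nat.exists_eq_pow_mul_and_not_dvd (n := x) (by rintro rfl; simp at hx) 3 (by norm_num)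
  have h2 : ¬ 2 ∣ y := fun h => hx (h.mul_left _)
  have h6 : Nat.Coprime 6 y := by
    rw [show 6 = 2 * 3 by norm_num]
    exact Nat.Coprime.mul_left ((Nat.Prime.coprime_iff_not_dvd Nat.prime_two).mpr h2)
      ((Nat.Prime.coprime_iff_not_dvd Nat.prime_three).mpr hy)
  refine ⟨α / 2, β / 2, 2 ^ (α % 2) * 3 ^ (β % 2), y, ?_, ?_, h6⟩
  · have e1 : 2 ^ α = (2 ^ (α / 2)) ^ 2 * 2 ^ (α % 2) := by
      rw [← pow_mul, ← pow_add]; congr 1; omega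
    have e2 : 3 ^ β = (3 ^ (β / 2)) ^ 2 * 3 ^ (β % 2) := by
      rw [← pow_mul, ← pow_add]; congr 1; omega
    rw [e1, e2]; ring
  · rcases Nat.mod_two_eq_zero_or_one α with a | a <;> rcases Nat.mod_two_eq_zero_or_one β with b | b <;>
      rw [a, b] <;> simp

/-! ### Part 7: the eta multiplier in terms of Jacobi symbols -/

lemma std24_twelve : (ZMod.stdAddChar ((12 : ℤ) : ZMod 24) : ℂ) = -1 := by
  rw [ZMod.stdAddChar_coe]
  rw [← Complex.exp_pi_mul_I]
  congr 1
  push_cast; ring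

lemma zmod24_inv : ∀ x y : ZMod 24, x * y = 1 → y = x := by decide

lemma zmod24_odd : ∀ x y : ZMod 24, x * y = 1 → 12 * x = 12 := by decide

lemma std24_sign (x d D : ZMod 24) (h : d * D = 1) (e : ℤ) (he : e = 1 ∨ e = -1) :
    (ZMod.stdAddChar (x + 18 * d * (e : ZMod 24)) : ℂ) = (e : ℂ) * ZMod.stdAddChar (x + 18 * d) := by
  rcases he with rfl | rfl
  · simp
  · have h1 : x + 18 * d * ((-1 : ℤ) : ZMod 24) = ((12 : ℤ) : ZMod 24) + (x + 18 * d) := by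
      have := zmod24_odd d D h
      have h24 : (24 : ZMod 24) = 0 := by decide
      push_cast
      linear_combination this - 2 * d * h24
    rw [h1, AddChar.map_add_eq_mul, std24_twelve]
    push_cast; ring

open NumberTheorySymbols in
lemma eta_core (c d D : ℕ) [NeZero c] (hd : Nat.Coprime d (24 * c)) (hd1 : 1 ≤ d)
    (hD : ((d : ℤ) : ZMod (24 * c)) * ((D : ℤ) : ZMod (24 * c)) = 1) :
    (ZMod.stdAddChar ((dN d c : ℤ) : ZMod (24 * c)) : ℂ) =
      ((J((c : ℤ) | d) : ℤ) : ℂ) * ZMod.stdAddChar (((d : ℤ) : ZMod 24) *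
        ((c - 3 * d - 9 * (d + 1) : ℤ) : ZMod 24) + 18 * ((d : ℤ) : ZMod 24)) *
      ZMod.stdAddChar (((D + d : ℤ)) : ZMod (24 * c)) := by
  have hc1 : 1 ≤ c := Nat.one_le_iff_ne_zero.mpr (NeZero.ne c)
  have hdc : Nat.Coprime d c := Nat.Coprime.coprime_mul_left_right hd
  have hd24 : Nat.Coprime d 24 := Nat.Coprime.coprime_mul_right_right hd
  have hrec := dN_recip d c hdc hc1 hd1
  have hd3 : ¬ 3 ∣ d := by
    intro h
    have := Nat.dvd_gcd h (show 3 ∣ 24 by norm_num)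
    rw [hd24] at this; omega
  have hd2 : Odd d := by
    rw [← Nat.not_even_iff_odd, even_iff_two_dvd]
    intro h
    have := Nat.dvd_gcd h (show 2 ∣ 24 by norm_num)
    rw [hd24] at this; omega
  have h3 := dN_dvd3 c d hd3
  have h8 := dN_mod8 d c hd2 hdc.symm
  have hJ : J((c : ℤ) | d) = 1 ∨ J((c : ℤ) | d) = -1 := by
    apply jacobiSym.eq_one_or_neg_one
    rw [Int.gcd_natCast_natCast]; exact hdc.symm
  set W := dN c d
  set X := dN d c
  set e := J((c : ℤ) | d)
  have h24 : (24 : ℤ) ∣ W - 9 * (d + 1 - 2 * e) := by omega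
  have hW : (W : ZMod 24) = ((9 * (d + 1 - 2 * e) : ℤ) : ZMod 24) := by
    rw [← sub_eq_zero, ← Int.cast_sub, ZMod.intCast_zmod_eq_zero_iff_dvd]; exact_mod_cast h24
  obtain ⟨k, hk⟩ : ((24 * c : ℕ) : ℤ) ∣ d * D - 1 := by
    rw [← ZMod.intCast_zmod_eq_zero_iff_dvd]; push_cast at hD ⊢; rw [hD, sub_self]
  have hX : (X : ZMod (24 * c)) = ((D + d : ℤ) : ZMod (24 * c)) +
      (((c : ℤ) * (D * (c - 3 * d - W)) : ℤ) : ZMod (24 * c)) := by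
    rw [← Int.cast_add, ← sub_eq_zero, ← Int.cast_sub, ZMod.intCast_zmod_eq_zero_iff_dvd]
    refine ⟨k * (d - X), ?_⟩
    linear_combination (d - X) * hk + (D : ℤ) * hrec
  have hD24 : (((d : ℤ) : ZMod 24)) * ((D : ℤ) : ZMod 24) = 1 := by
    rw [← Int.cast_mul, ← sub_eq_zero, ← Int.cast_one, ← Int.cast_sub, ZMod.intCast_zmod_eq_zero_iff_dvd, hk]
    exact ⟨c * k, by push_cast; ring⟩
  have hDd := zmod24_inv _ _ hD24
  rw [hX, AddChar.map_add_eq_mul, stdAddChar_mul_eq (24 * c) 24 c (by ring), mul_comm]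
  congr 1
  rw [← std24_sign _ _ _ hD24 e hJ]
  congr 1
  push_cast at hDd hW ⊢
  rw [hDd, hW]
  ring

open NumberTheorySymbols in
/-- The factor depending only on `d` modulo `24`. -/
noncomputable def Gfac (c c' j : ℕ) (y : ZMod 24) : ℂ :=
  ((J((j : ℤ) | y.val) : ℤ) : ℂ) * ((qrSign y.val c' : ℤ) : ℂ) *
    ZMod.stdAddChar (y * ((c : ZMod 24) - 3 * y - 9 * (y + 1)) + 18 * y)

lemma jac_norm (a : ℤ) (b : ℕ) : ‖((jacobiSym a b : ℤ) : ℂ)‖ ≤ 1 := by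
  rcases jacobiSym.trichotomy a b with h | h | h <;> rw [h] <;> simp

lemma Gfac_norm (c c' j : ℕ) (y : ZMod 24) : ‖Gfac c c' j y‖ ≤ 1 := by
  unfold Gfac
  rw [norm_mul, norm_mul, norm_stdAddChar, mul_one]
  exact mul_le_one₀ (jac_norm _ _) (norm_nonneg _) (by unfold qrSign; exact jac_norm _ _)

open NumberTheorySymbols in
lemma Gfac_nat (c c' j d h : ℕ) (hj : j = 1 ∨ j = 2 ∨ j = 3 ∨ j = 6) (hc : c = h ^ 2 * j * c')
    (hc' : Odd c') (hd : Odd d) (hh : Nat.Coprime h d) :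
    ((J((c : ℤ) | d) : ℤ) : ℂ) * ZMod.stdAddChar (((d : ℤ) : ZMod 24) *
        ((c - 3 * d - 9 * (d + 1) : ℤ) : ZMod 24) + 18 * ((d : ℤ) : ZMod 24)) =
      Gfac c c' j ((d : ℕ) : ZMod 24) * ((J((d : ℤ) | c') : ℤ) : ℂ) := by
  unfold Gfac
  have e1 : J((j : ℤ) | d) = J((j : ℤ) | (d : ZMod 24).val) := by
    rw [ZMod.val_natCast]
    have ho : Odd (d % 24) := by
      rw [Nat.odd_iff] at hd ⊢; omega
    rw [jacobiSym.mod_right _ hd, jacobiSym.mod_right _ ho]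
    congr 1
    rcases hj with rfl | rfl | rfl | rfl <;> simp only [Int.natAbs_natCast] <;> omega
  have e2 : qrSign d c' = qrSign (d : ZMod 24).val c' := by
    rw [ZMod.val_natCast]
    unfold qrSign
    congr 2
    rw [ZMod.natCast_eq_natCast_iff']
    omega
  have e3 : J((c : ℤ) | d) = J((j : ℤ) | d) * (qrSign d c' * J((d : ℤ) | c')) := by
    rw [hc]
    push_cast
    rw [jacobiSym.mul_left, jacobiSym.mul_left, jacobiSym.pow_left,
      jacobiSym.sq_one (by rw [Int.gcd_natCast_natCast]; exact hh), one_mul,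
      jacobiSym.quadratic_reciprocity' hc' hd]
  rw [e3, e1, e2]
  push_cast
  ring

/-! ### Part 8: assembling -/

/-- The summand as a function on units modulo `c`. -/
noncomputable def termC (m n : ℤ) (c : ℕ) [NeZero c] (w : (ZMod c)ˣ) : ℂ :=
  ZMod.stdAddChar ((dN (w : ZMod c).val c : ℤ) : ZMod (24 * c)) *
    ZMod.stdAddChar (((m - 1 : ℤ) : ZMod c) * ((w⁻¹ : (ZMod c)ˣ) : ZMod c) +
      ((n - 1 : ℤ) : ZMod c) * (w : ZMod c))

lemma eFun_int (c : ℕ) [NeZero c] (X : ℤ) : eFun ((X : ℝ) / c) = ZMod.stdAddChar (X : ZMod c) := by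
  rw [ZMod.stdAddChar_coe]
  unfold eFun
  congr 1
  push_cast; ring

lemma exp_dedekind (d c : ℕ) [NeZero c] :
    Complex.exp ((Real.pi : ℂ) * Complex.I * (dedekindS (d : ℤ) c)) =
      ZMod.stdAddChar ((dN d c : ℤ) : ZMod (24 * c)) := by
  have hc1 : 1 ≤ c := Nat.one_le_iff_ne_zero.mpr (NeZero.ne c)
  have h := dedekindS_eq d c hc1
  have hc : (c : ℂ) ≠ 0 := by exact_mod_cast NeZero.ne c
  have h' : 12 * (c : ℂ) * (dedekindS (d : ℤ) c : ℂ) = ((dN d c : ℤ) : ℂ) := by exact_mod_cast h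
  rw [ZMod.stdAddChar_coe]
  congr 1
  rw [← h']
  push_cast
  field_simp
  ring

lemma klooS_eq (m n : ℤ) (c : ℕ) [NeZero c] :
    klooS m n c = Complex.exp ((Real.pi : ℂ) * Complex.I / 4) * ∑ w : (ZMod c)ˣ, termC m n c w := by
  have hc1 : 1 ≤ c := Nat.one_le_iff_ne_zero.mpr (NeZero.ne c)
  unfold klooS
  congr 1
  refine sum_bij (fun d hd => ZMod.unitOfCoprime d (mem_filter.mp hd).2) (fun _ _ => mem_univ _) ?_ ?_ ?_
  · intro d hd d' hd' h
    have h1 := congrArg Units.val h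
    rw [ZMod.coe_unitOfCoprime, ZMod.coe_unitOfCoprime, ZMod.natCast_eq_natCast_iff'] at h1
    have a1 := mem_Icc.mp (mem_filter.mp hd).1
    have a2 := mem_Icc.mp (mem_filter.mp hd').1
    rcases eq_or_lt_of_le a1.2 with b1 | b1 <;> rcases eq_or_lt_of_le a2.2 with b2 | b2
    · omega
    · rw [b1, Nat.mod_self, Nat.mod_eq_of_lt b2] at h1; omega
    · rw [b2, Nat.mod_self, Nat.mod_eq_of_lt b1] at h1; omega
    · rw [Nat.mod_eq_of_lt b1, Nat.mod_eq_of_lt b2] at h1; omega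
  · intro w _
    have hcop := ZMod.val_coe_unit_coprime w
    have hlt := ZMod.val_lt (w : ZMod c)
    by_cases h0 : (w : ZMod c).val = 0
    · have hc : c = 1 := by rw [h0] at hcop; simpa using hcop
      subst hc
      exact ⟨1, by simp, Subsingleton.elim _ _⟩
    · refine ⟨(w : ZMod c).val, ?_, ?_⟩
      · rw [mem_filter, mem_Icc]
        exact ⟨⟨by omega, hlt.le⟩, hcop⟩
      · apply Units.ext
        rw [ZMod.coe_unitOfCoprime]; simp
  · intro d hd
    unfold termC
    have hcop := (mem_filter.mp hd).2
    rw [exp_dedekind, ← ZMod.inv_coe_unit, ZMod.coe_unitOfCoprime, ZMod.val_natCast, dN_mod d c hc1]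
    congr 1
    have := eFun_int c ((m - 1) * (((d : ZMod c)⁻¹).val : ℕ) + (n - 1) * d)
    push_cast at this ⊢
    rw [this]
    congr 2
    rw [ZMod.natCast_zmod_val]

lemma klooS_le (m n : ℤ) (c c' j h : ℕ) [NeZero c] [NeZero c'] [NeZero (24 * (h ^ 2 * j))]
    (hj : j = 1 ∨ j = 2 ∨ j = 3 ∨ j = 6)
    (hc : c = h ^ 2 * j * c') (hc' : Odd c') (hq : 24 * c = 24 * (h ^ 2 * j) * c') :
    ‖klooS m n c‖ ≤ ‖KS (24 * (h ^ 2 * j) * c') (fun u =>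
      Gfac c c' j (ZMod.castHom (Dvd.intro _ rfl : 24 ∣ 24 * (h ^ 2 * j)) (ZMod 24)
        (ZMod.unitsMap (dvd_mul_right (24 * (h ^ 2 * j)) c') u : (ZMod (24 * (h ^ 2 * j)))ˣ)) *
      chiJ c' (ZMod.unitsMap (dvd_mul_left c' (24 * (h ^ 2 * j))) u))
      ((24 * m - 23 : ℤ) : ZMod (24 * (h ^ 2 * j) * c')) ((24 * n - 23 : ℤ) : ZMod (24 * (h ^ 2 * j) * c'))‖ := by
  have hc1 : 1 ≤ c := Nat.one_le_iff_ne_zero.mpr (NeZero.ne c)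
  have hdvd : c ∣ 24 * (h ^ 2 * j) * c' := ⟨24, by rw [← hq]; ring⟩
  obtain ⟨K, hK1, -, hK⟩ := units_fiber (24 * (h ^ 2 * j) * c') c hdvd
  have hexp : ‖Complex.exp ((Real.pi : ℂ) * Complex.I / 4)‖ = 1 := by
    have := Complex.norm_exp_ofReal_mul_I (Real.pi / 4)
    rw [← this]; congr 2; push_cast; ring
  rw [klooS_eq, norm_mul, hexp, one_mul]
  have h1 : ‖∑ w : (ZMod c)ˣ, termC m n c w‖ ≤
      ‖∑ u : (ZMod (24 * (h ^ 2 * j) * c'))ˣ, termC m n c (ZMod.unitsMap hdvd u)‖ := by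
    rw [hK, norm_mul]
    have : (1 : ℝ) ≤ ‖(K : ℂ)‖ := by
      rw [Complex.norm_natCast]; exact_mod_cast hK1
    exact le_mul_of_one_le_left (norm_nonneg _) this
  refine h1.trans (le_of_eq ?_)
  congr 1
  unfold KS
  refine sum_congr rfl fun u _ => ?_
  set d := (u : ZMod (24 * (h ^ 2 * j) * c')).val with hd
  set D := ((u⁻¹ : (ZMod (24 * (h ^ 2 * j) * c'))ˣ) : ZMod (24 * (h ^ 2 * j) * c')).val with hD
  have hdu : ((d : ℤ) : ZMod (24 * (h ^ 2 * j) * c')) = u := by rw [hd]; simp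
  have hDu : ((D : ℤ) : ZMod (24 * (h ^ 2 * j) * c')) = (u⁻¹ : (ZMod (24 * (h ^ 2 * j) * c'))ˣ) := by
    rw [hD]; simp
  have hcop : Nat.Coprime d (24 * c) := by rw [hq]; exact ZMod.val_coe_unit_coprime u
  have hd1 : 1 ≤ d := by
    rcases Nat.eq_zero_or_pos d with h0 | h0
    · rw [h0, Nat.coprime_zero_left] at hcop; omega
    · exact h0
  have hdD : ((d : ℤ) : ZMod (24 * c)) * ((D : ℤ) : ZMod (24 * c)) = 1 := by
    have : ((d : ℤ) : ZMod (24 * (h ^ 2 * j) * c')) * ((D : ℤ) : ZMod (24 * (h ^ 2 * j) * c')) = 1 := by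
      rw [hdu, hDu]; simp
    rw [hq]; exact this
  have hdodd : Odd d := by
    rw [← Nat.not_even_iff_odd, even_iff_two_dvd]
    intro h
    have := Nat.dvd_gcd h (show 2 ∣ 24 * c by omega)
    rw [hcop] at this; omega
  have hhd : Nat.Coprime h d := by
    refine (Nat.Coprime.coprime_dvd_right ?_ hcop).symm
    exact ⟨24 * (h * j * c'), by rw [hc]; ring⟩
  have hmain := eta_core c d D hcop hd1 hdD
  rw [Gfac_nat c c' j d h hj hc hc' hdodd hhd] at hmain
  have e1 : (((ZMod.unitsMap hdvd u : (ZMod c)ˣ) : ZMod c)) = ((d : ℤ) : ZMod c) :=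
    (unitsMap_int _ _ hdvd u d hdu).symm
  have e2 : ((((ZMod.unitsMap hdvd u)⁻¹ : (ZMod c)ˣ) : ZMod c)) = ((D : ℤ) : ZMod c) := by
    rw [← map_inv]; exact (unitsMap_int _ _ hdvd u⁻¹ D hDu).symm
  have e3 : ZMod.castHom (Dvd.intro _ rfl : 24 ∣ 24 * (h ^ 2 * j)) (ZMod 24)
        (ZMod.unitsMap (dvd_mul_right (24 * (h ^ 2 * j)) c') u : (ZMod (24 * (h ^ 2 * j)))ˣ) =
        ((d : ℕ) : ZMod 24) := by
    rw [← unitsMap_int _ _ (dvd_mul_right (24 * (h ^ 2 * j)) c') u d hdu]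
    simp
  have e4 := chiJ_int c' _ d (unitsMap_int _ _ (dvd_mul_left c' (24 * (h ^ 2 * j))) u d hdu)
  have e5 : (ZMod.stdAddChar (((m - 1 : ℤ) : ZMod c) * ((D : ℤ) : ZMod c) +
      ((n - 1 : ℤ) : ZMod c) * ((d : ℤ) : ZMod c)) : ℂ) =
      ZMod.stdAddChar (((24 : ℕ) * ((m - 1) * D + (n - 1) * d) : ℤ) : ZMod (24 * c)) := by
    rw [stdAddChar_mul_eq (24 * c) c 24 rfl]
    push_cast; rfl
  have e6 : (ZMod.stdAddChar (((24 * m - 23) * D + (24 * n - 23) * d : ℤ) : ZMod (24 * c)) : ℂ) =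
      ZMod.stdAddChar (((24 * m - 23 : ℤ) : ZMod (24 * (h ^ 2 * j) * c')) *
        ((u⁻¹ : (ZMod (24 * (h ^ 2 * j) * c'))ˣ) : ZMod (24 * (h ^ 2 * j) * c')) +
        ((24 * n - 23 : ℤ) : ZMod (24 * (h ^ 2 * j) * c')) * (u : ZMod (24 * (h ^ 2 * j) * c'))) := by
    rw [← hdu, ← hDu, ← Int.cast_mul, ← Int.cast_mul, ← Int.cast_add, ZMod.stdAddChar_coe,
      ZMod.stdAddChar_coe, hq]
  unfold termC
  beta_reduce
  rw [e1, e2, e3, e4, e5, ← e6]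
  have e7 : dN ((((d : ℤ) : ZMod c)).val) c = dN d c := by
    rw [Int.cast_natCast, ZMod.val_natCast, dN_mod d c hc1]
  rw [e7, hmain, mul_assoc _ _ (ZMod.stdAddChar _), ← AddChar.map_add_eq_mul, ← Int.cast_add]
  congr 3
  push_cast; ring

theorem statement4 :
    ∃ C : ℝ, 0 < C ∧
      ∀ m n v M : ℤ, 0 < v → Squarefree M → 24 * m - 23 = v ^ 2 * M →
        ∀ c : ℕ, 1 ≤ c →
          ‖klooS m n c‖ ≤
            C * ((Int.gcd v (c : ℤ)).divisors.card : ℝ) * (c.divisors.card : ℝ) *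
              Real.sqrt ((Int.gcd (M * (24 * n - 23)) (c : ℤ) : ℕ) : ℝ) *
                Real.sqrt (c : ℝ) := by
  refine ⟨576, by norm_num, ?_⟩
  intro m n v M hv hM hA c hc
  obtain ⟨i, k, j, c', hcc, hj, h6⟩ := split_six c hc
  set h : ℕ := 2 ^ i * 3 ^ k with hh
  have hh0 : 0 < h := by positivity
  have hj0 : 0 < j := by omega
  have hj6 : j ≤ 6 := by omega
  have hc'0 : c' ≠ 0 := by rintro rfl; simp at hcc; omega
  have : NeZero c := ⟨by omega⟩
  have : NeZero c' := ⟨hc'0⟩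
  have hq0 : 0 < 24 * (h ^ 2 * j) := by positivity
  have : NeZero (24 * (h ^ 2 * j)) := ⟨hq0.ne'⟩
  have hc'odd : Odd c' := by
    rw [← Nat.not_even_iff_odd, even_iff_two_dvd]
    intro h
    have := Nat.dvd_gcd (show 2 ∣ 6 by norm_num) h
    rw [h6] at this; omega
  have hq : 24 * c = 24 * (h ^ 2 * j) * c' := by rw [hcc]; ring
  have h2c : Nat.Coprime 2 c' := Nat.Coprime.coprime_dvd_left (by norm_num) h6
  have h3c : Nat.Coprime 3 c' := Nat.Coprime.coprime_dvd_left (by norm_num) h6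
  -- coprimality with the smooth part
  have smooth : ∀ X : ℤ, IsCoprime X 2 → IsCoprime X 3 → IsCoprime X ((24 * (h ^ 2 * j) : ℕ) : ℤ) := by
    intro X x2 x3
    have x6 : IsCoprime X 6 := by
      have := x2.mul_right x3
      norm_num at this; exact this
    have x24 : IsCoprime X 24 := by
      have := (x2.mul_right x2).mul_right x6
      norm_num at this; exact this
    have xj : IsCoprime X (j : ℤ) := by
      rcases hj with rfl | rfl | rfl | rfl
      · simpa using isCoprime_one_right
      · exact_mod_cast x2
      · exact_mod_cast x3
      · exact_mod_cast x6
    rw [hh]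
    push_cast
    exact x24.mul_right (((x2.pow_right.mul_right x3.pow_right).pow_right).mul_right xj)
  have hcop : Nat.Coprime (24 * (h ^ 2 * j)) c' := by
    rw [← Nat.isCoprime_iff_coprime]
    apply IsCoprime.symm
    apply smooth
    · exact_mod_cast Nat.isCoprime_iff_coprime.mpr h2c.symm
    · exact_mod_cast Nat.isCoprime_iff_coprime.mpr h3c.symm
  obtain ⟨s, r, hrs'⟩ := Nat.isCoprime_iff_coprime.mpr hcop
  have hrs : r * (c' : ℤ) + s * ((24 * (h ^ 2 * j) : ℕ) : ℤ) = 1 := by linear_combination hrs'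
  have hsr : s * ((24 * (h ^ 2 * j) : ℕ) : ℤ) + r * (c' : ℤ) = 1 := by linear_combination hrs'
  have h1 := klooS_le m n c c' j h hj hcc hc'odd hq
  rw [KS_crt (24 * (h ^ 2 * j)) c' hcop r s hrs _
    (fun x => Gfac c c' j (ZMod.castHom (Dvd.intro _ rfl : 24 ∣ 24 * (h ^ 2 * j)) (ZMod 24) (x : ZMod _)))
    (chiJ c') (fun u => rfl), norm_mul] at h1
  have hBu : IsUnit ((r * (24 * n - 23) : ℤ) : ZMod (24 * (h ^ 2 * j))) := by
    rw [ZMod.coe_int_isUnit_iff_isCoprime]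
    apply IsCoprime.mul_right
    · exact ⟨s, c', by linear_combination hrs⟩
    · apply IsCoprime.symm
      apply smooth
      · exact ⟨1, -(12 * n - 12), by ring⟩
      · exact ⟨1, -(8 * n - 8), by ring⟩
  have h2 := KS_six i k j (24 * (h ^ 2 * j)) rfl
    (fun x => Gfac c c' j (ZMod.castHom (Dvd.intro _ rfl : 24 ∣ 24 * (h ^ 2 * j)) (ZMod 24) (x : ZMod _)))
    (fun u => Gfac_norm _ _ _ _) (by
      rintro u w ⟨t, ht⟩
      beta_reduce
      congr 1
      rw [Units.val_mul, map_mul, ht, map_add, map_one, map_mul]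
      have : ZMod.castHom (Dvd.intro _ rfl : 24 ∣ 24 * (h ^ 2 * j)) (ZMod 24) 24 = 0 := by
        rw [map_ofNat]; decide
      rw [this]; ring)
    ((r * (24 * m - 23) : ℤ) : ZMod (24 * (h ^ 2 * j))) _ hBu
  have hMsq : ∀ p : ℕ, p.Prime → ¬ (p : ℤ) ^ 2 ∣ M := by
    intro p hp hd
    rw [pow_two] at hd
    have := hM _ hd
    exact (Nat.prime_iff_prime_int.mp hp).not_unit this
  have h3 := KS_odd c' inferInstance hc'odd v (s * M) (s * (24 * n - 23)) (fun p hp hpc =>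
    sq_not_dvd s c' (24 * (h ^ 2 * j)) r M hsr p hpc (hMsq p hp))
  rw [show s * M * (s * (24 * n - 23)) = s * (s * (M * (24 * n - 23))) by ring,
    gcd_unit_mul s c' _ r _ hsr, gcd_unit_mul s c' _ r _ hsr,
    show v ^ 2 * (s * M) = s * (24 * m - 23) by rw [hA]; ring] at h3
  refine h1.trans ((mul_le_mul h2 h3 (norm_nonneg _) (by positivity)).trans ?_)
  have hc'c : c' ∣ c := ⟨h ^ 2 * j, by rw [hcc]; ring⟩
  have t1 : (c'.divisors.card : ℝ) ≤ c.divisors.card := by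
    exact_mod_cast card_le_card (Nat.divisors_subset_of_dvd (by omega) hc'c)
  have t2 : (1 : ℝ) ≤ ((Int.gcd v (c : ℤ)).divisors.card : ℝ) := by
    have : 0 < (Int.gcd v (c : ℤ)).divisors.card := by
      rw [card_pos, Nat.nonempty_divisors]
      exact (Int.gcd_pos_of_ne_zero_left _ hv.ne').ne'
    exact_mod_cast this
  have t3 : (Int.gcd (M * (24 * n - 23)) (c' : ℤ) : ℝ) ≤ (Int.gcd (M * (24 * n - 23)) (c : ℤ) : ℝ) := by
    have hpos : 0 < Int.gcd (M * (24 * n - 23)) (c : ℤ) :=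
      Int.gcd_pos_of_ne_zero_right _ (by exact_mod_cast (by omega : c ≠ 0))
    have := Nat.le_of_dvd hpos (Int.gcd_dvd_gcd_of_dvd_right (M * (24 * n - 23))
      (Int.natCast_dvd_natCast.mpr hc'c))
    exact_mod_cast this
  have t4 : ((h * j : ℕ) : ℝ) * Real.sqrt c' ≤ 3 * Real.sqrt c := by
    rw [show (3 : ℝ) = Real.sqrt 9 by
      rw [show (9 : ℝ) = 3 ^ 2 by norm_num]; exact (Real.sqrt_sq (by norm_num)).symm,
      ← Real.sqrt_mul (by norm_num), ← Real.sqrt_sq (Nat.cast_nonneg (h * j) : (0 : ℝ) ≤ ((h * j : ℕ) : ℝ)),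
      ← Real.sqrt_mul (by positivity)]
    apply Real.sqrt_le_sqrt
    have : (h * j) ^ 2 * c' ≤ 9 * c := by
      rw [hcc]
      calc (h * j) ^ 2 * c' = j * (h ^ 2 * j * c') := by ring
        _ ≤ 9 * (h ^ 2 * j * c') := Nat.mul_le_mul_right _ (by omega)
    exact_mod_cast this
  have t5 := Real.sqrt_le_sqrt t3
  rw [Nat.cast_mul c', Real.sqrt_mul (by positivity)]
  set g' := Real.sqrt (Int.gcd (M * (24 * n - 23)) (c' : ℤ) : ℝ) with hg'
  set g := Real.sqrt (Int.gcd (M * (24 * n - 23)) (c : ℤ) : ℝ) with hg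
  have hg'0 : 0 ≤ g' := Real.sqrt_nonneg _
  have hg0 : 0 ≤ g := Real.sqrt_nonneg _
  calc 192 * ((h * j : ℕ) : ℝ) * ((c'.divisors.card : ℝ) * (Real.sqrt c' * g'))
      = 192 * (((h * j : ℕ) : ℝ) * Real.sqrt c') * ((c'.divisors.card : ℝ) * g') := by ring
    _ ≤ 192 * (3 * Real.sqrt c) * ((c.divisors.card : ℝ) * g) := by gcongr
    _ = 576 * 1 * (c.divisors.card : ℝ) * g * Real.sqrt c := by ring
    _ ≤ _ := by gcongr
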